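/- Let K be a number field with [K:ℚ] = 4 containing an element s with s² = 2, and let O ⊆ K be an order with s ∈ O. Then the Pythagoras number of O is at most 5; that is, every element of O that is a sum of finitely many squares of elements of O is a sum of at most 5 squares of elements of O. -/

import Mathlib

/-!
Write `R = ℤ[√2]`, a principal ideal domain. The order `O` is a free `R`-module of rank `2`, with basis
`α, β` say, and `∑ (aᵢ α + bᵢ β)²` depends only on the Gram matrix of the vectors `a, b` over `R`. So
it suffices to show that the Gram matrix of two vectors of `R⁶` is also the Gram matrix of two vectors
of `R⁵` (`QO.six_to_five`); induction on the length then gives the theorem.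

If, after omitting one of the six coordinates, the two vectors of `R⁵` that remain do not both have
coordinate sum divisible by `√2`, their Gram matrix is that of two vectors of `R⁴`
(`QO.five_to_four`), and the omitted coordinate is put back as the fifth. If this fails for every
coordinate, then all coordinates are divisible by `√2`, and descent applies.

For `QO.five_to_four` one may assume that the form `(A, B, C)` has `2 ∣ A` and `C ≡ 1 mod 2`. The
quaternion order `H` over `R` with basis `1, (1 + i)/√2, (1 + j)/√2, (1 + i + j + k)/2` is
norm-Euclidean (`QO.euclid`, a covering-radius estimate for the lattices `D₄` and its dual), hence its
left ideals are principal, and a binary form whose discriminant is a sum of three squares in `ℚ(√2)`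
is the norm form of a pair of elements of `H` (`QO.gram_exists`). Apply this to `(C, √2 B, A/2)`.
Multiplying the pair by a unit of `H` makes the first element congruent to `1` modulo `√2`; the
congruences on `A` and `C` then force the first element, and `√2` times the second, to have
coordinates in `R` (`QO.gram_four`).

The determinant of a Gram matrix is zero or totally positive, so what remains is the three-square
theorem: every totally positive `n` in `R` is a sum of three squares in `ℚ(√2)` (`QO.TP.threeSq`). As
for `ℤ`, Dirichlet's theorem and quadratic reciprocity provide `ν` with `n ∣ ν + 1` and `-n` a square
modulo `ν`, whence `n` is represented by a totally positive definite ternary form of determinant `1`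
(`QO.threeSq_of_dvd`). Minkowski's theorem gives small values of such a form, from which it is seen to
be equivalent over `ℚ(√2)` to a sum of three squares (`QO.threeSq_of_unimodular`).
-/

/-! ### The ring `ℤ[√2]` -/

namespace QO

/-- The ring `ℤ[√2]`. -/
abbrev R := ℤ√2

theorem two_ne_sq (n : ℤ) : (2 : ℤ) ≠ n * n := by
  intro h
  have h1 : n ≤ 1 := by nlinarith
  have h2 : -1 ≤ n := by nlinarith
  interval_cases n <;> omega

instance : Zsqrtd.Nonsquare 2 := ⟨fun n h => two_ne_sq n (by exact_mod_cast h)⟩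

instance instIsDomainR : IsDomain R := inferInstanceAs (IsDomain (Zsqrtd ((2 : ℕ) : ℤ)))

theorem norm_eq_zero {x : R} : x.norm = 0 ↔ x = 0 := Zsqrtd.norm_eq_zero two_ne_sq x

theorem norm_eq (x : R) : x.norm = x.re ^ 2 - 2 * x.im ^ 2 := by
  rw [Zsqrtd.norm_def]; ring

/-- The element `√2` of `ℤ[√2]`. -/
def rt : R := ⟨0, 1⟩

@[simp] theorem rt_sq : rt ^ 2 = 2 := by ext <;> simp [rt, pow_two]
theorem rt_mul_rt : rt * rt = 2 := by rw [← pow_two, rt_sq]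
theorem rt_ne_zero : rt ≠ 0 := by intro h; simpa [rt] using congrArg Zsqrtd.im h
theorem two_ne_zeroR : (2 : R) ≠ 0 := by intro h; simpa using congrArg Zsqrtd.re h
theorem rt_dvd_two : rt ∣ 2 := ⟨rt, by rw [rt_mul_rt]⟩

theorem mk_eq (a b : ℤ) : (⟨a, b⟩ : R) = a + b * rt := by ext <;> simp [rt]
theorem eta_rt (x : R) : x = x.re + x.im * rt := by ext <;> simp [rt]

@[simp] theorem rt_re : rt.re = 0 := rfl
@[simp] theorem rt_im : rt.im = 1 := rfl

theorem rt_dvd_iff (x : R) : rt ∣ x ↔ 2 ∣ x.re := by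
  constructor
  · rintro ⟨y, rfl⟩
    simp
  · rintro ⟨k, hk⟩
    exact ⟨⟨x.im, k⟩, by ext <;> simp [hk]⟩

theorem two_dvd_iff (x : R) : 2 ∣ x ↔ 2 ∣ x.re ∧ 2 ∣ x.im := by
  constructor
  · rintro ⟨y, rfl⟩
    simp
  · rintro ⟨⟨k, hk⟩, ⟨l, hl⟩⟩
    exact ⟨⟨k, l⟩, by ext <;> simp [hk, hl]⟩

/-- The embedding `ℤ[√2] → ℝ` with `√2 ↦ √2`. -/
noncomputable def s1 : R →+* ℝ := Zsqrtd.lift ⟨√2, by norm_num⟩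
/-- The embedding `ℤ[√2] → ℝ` with `√2 ↦ -√2`. -/
noncomputable def s2 : R →+* ℝ := Zsqrtd.lift ⟨-√2, by norm_num⟩

theorem s1_apply (x : R) : s1 x = x.re + x.im * √2 := by simp [s1]
theorem s2_apply (x : R) : s2 x = x.re - x.im * √2 := by simp [s2]; ring

@[simp] theorem s1_two : s1 2 = 2 := map_ofNat s1 2
@[simp] theorem s2_two : s2 2 = 2 := map_ofNat s2 2

theorem s1_mul_s2 (x : R) : s1 x * s2 x = x.norm := by
  rw [s1_apply, s2_apply, norm_eq]
  have : √2 ^ 2 = 2 := by norm_num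
  push_cast
  linear_combination (-(x.im:ℝ)^2) * this

theorem s1_add_s2 (x : R) : s1 x + s2 x = 2 * x.re := by
  rw [s1_apply, s2_apply]; ring

theorem s1_ne_zero {x : R} (h : x ≠ 0) : s1 x ≠ 0 := by
  intro h1
  have := s1_mul_s2 x
  rw [h1, zero_mul] at this
  exact h (norm_eq_zero.1 (by exact_mod_cast this.symm))

theorem s2_ne_zero {x : R} (h : x ≠ 0) : s2 x ≠ 0 := by
  intro h1
  have := s1_mul_s2 x
  rw [h1, mul_zero] at this
  exact h (norm_eq_zero.1 (by exact_mod_cast this.symm))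

/-- Total positivity: positive at both real places. -/
def TP (x : R) : Prop := 0 < s1 x ∧ 0 < s2 x

theorem TP.add {x y : R} (hx : TP x) (hy : TP y) : TP (x + y) :=
  ⟨by rw [map_add]; exact add_pos hx.1 hy.1, by rw [map_add]; exact add_pos hx.2 hy.2⟩

theorem TP.mul {x y : R} (hx : TP x) (hy : TP y) : TP (x * y) :=
  ⟨by rw [map_mul]; exact mul_pos hx.1 hy.1, by rw [map_mul]; exact mul_pos hx.2 hy.2⟩

theorem TP.of_mul {x y : R} (hx : TP x) (hy : TP (x * y)) : TP y := by
  have h1 := hy.1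
  have h2 := hy.2
  rw [map_mul] at h1 h2
  exact ⟨pos_of_mul_pos_right h1 hx.1.le, pos_of_mul_pos_right h2 hx.2.le⟩

theorem TP_sq {x : R} (h : x ≠ 0) : TP (x ^ 2) :=
  ⟨by rw [map_pow]; have := s1_ne_zero h; positivity,
   by rw [map_pow]; have := s2_ne_zero h; positivity⟩

theorem TP.ne_zero {x : R} (h : TP x) : x ≠ 0 := by
  rintro rfl; have := h.1; simp at this

theorem TP_iff (x : R) : TP x ↔ 0 < x.re ∧ 0 < x.norm := by
  have h1 := s1_mul_s2 x
  have h2 := s1_add_s2 x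
  constructor
  · rintro ⟨ha, hb⟩
    have h3 : (0:ℝ) < x.norm := by rw [← h1]; positivity
    have h4 : (0:ℝ) < x.re := by linarith
    exact ⟨by exact_mod_cast h4, by exact_mod_cast h3⟩
  · rintro ⟨ha, hb⟩
    have ha' : (0:ℝ) < x.re := by exact_mod_cast ha
    have hb' : (0:ℝ) < x.norm := by exact_mod_cast hb
    rw [← h1] at hb'
    rcases pos_and_pos_or_neg_and_neg_of_mul_pos hb' with h | h
    · exact h
    · linarith [h.1, h.2]

theorem TP_natCast {n : ℕ} (h : 0 < n) : TP (n : R) := by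
  have : (0:ℝ) < n := by exact_mod_cast h
  exact ⟨by simpa using h, by simpa using h⟩

theorem TP_one : TP (1 : R) := by simpa using TP_natCast one_pos
theorem TP_two : TP (2 : R) := by simpa using TP_natCast two_pos

/-- Division with remainder, by rounding both coordinates of the quotient in `ℚ(√2)`. -/
theorem exists_div (a b : R) (hb : b ≠ 0) : ∃ q : R, (a - b * q).norm.natAbs < b.norm.natAbs := by
  have hn : (b.norm : ℤ) ≠ 0 := fun h => hb (norm_eq_zero.1 h)
  set n := b.norm with hnd
  set c := a * star b with hc
  -- `a / b = c / n`
  have key : ∀ m : ℤ, ∃ q : ℤ, 4 * (m - n * q) ^ 2 ≤ n ^ 2 := by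
    intro m
    refine ⟨round ((m : ℚ) / n), ?_⟩
    have h1 := abs_sub_round ((m : ℚ) / n)
    have hnq : (n : ℚ) ≠ 0 := by exact_mod_cast hn
    set q := round ((m : ℚ) / n)
    have h2 : ((m:ℚ) / n - q) ^ 2 ≤ (1/2) ^ 2 := by
      rw [← sq_abs]; gcongr
    have h3 : ((m:ℚ) - n * q) ^ 2 = n ^ 2 * ((m:ℚ) / n - q) ^ 2 := by field_simp
    have h4 : 4 * ((m:ℚ) - n * q) ^ 2 ≤ n ^ 2 := by
      rw [h3]; nlinarith [sq_nonneg (n:ℚ)]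
    exact_mod_cast h4
  obtain ⟨q1, h1⟩ := key c.re
  obtain ⟨q2, h2⟩ := key c.im
  refine ⟨⟨q1, q2⟩, ?_⟩
  have e1 : (c - n * ⟨q1, q2⟩).norm = (a - b * ⟨q1, q2⟩).norm * n := by
    have : c - n * ⟨q1, q2⟩ = (a - b * ⟨q1, q2⟩) * star b := by
      rw [hnd, Zsqrtd.norm_eq_mul_conj, hc]; ring
    rw [this, Zsqrtd.norm_mul, Zsqrtd.norm_conj]
  rw [norm_eq (c - _)] at e1
  simp at e1
  have h5 : |(a - b * ⟨q1, q2⟩).norm * n| < n ^ 2 := by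
    rw [← e1, abs_lt]
    have : 0 < n ^ 2 := by positivity
    constructor <;> nlinarith [sq_nonneg (c.re - n * q1), sq_nonneg (c.im - n * q2)]
  rw [abs_mul, ← sq_abs n, pow_two] at h5
  have h6 := lt_of_mul_lt_mul_right h5 (abs_nonneg n)
  zify
  exact h6

theorem natAbs_norm_le_mul (a b : R) (hb : b ≠ 0) : a.norm.natAbs ≤ (a * b).norm.natAbs := by
  rw [Zsqrtd.norm_mul, Int.natAbs_mul]
  have : b.norm.natAbs ≠ 0 := by simpa [norm_eq_zero] using hb
  exact Nat.le_mul_of_pos_right _ (by omega)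

/-- The norm-Euclidean structure; kept out of instance search, since only the principal ideal
property is used. -/
@[reducible] noncomputable def euclideanR : EuclideanDomain R :=
  { Zsqrtd.commRing, instIsDomainR with
    quotient := fun a b => open Classical in
      if hb : b = 0 then 0 else (exists_div a b hb).choose
    quotient_zero := fun a => by simp
    remainder := fun a b => open Classical in
      a - b * (if hb : b = 0 then 0 else (exists_div a b hb).choose)
    quotient_mul_add_remainder_eq := fun a b => by ring
    r := fun a b => a.norm.natAbs < b.norm.natAbs
    r_wellFounded := (measure fun a : R => a.norm.natAbs).wf
    remainder_lt := fun a b hb => by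
      simp only [hb, dif_neg, not_false_eq_true]
      exact (exists_div a b hb).choose_spec
    mul_left_not_lt := fun a b hb => not_lt.2 (natAbs_norm_le_mul a b hb) }

instance : IsPrincipalIdealRing R := @EuclideanDomain.to_principal_ideal_domain R euclideanR

theorem isUnit_iff (u : R) : IsUnit u ↔ u.norm.natAbs = 1 := Zsqrtd.norm_eq_one_iff.symm

/-- Totally positive units of `ℤ[√2]` are squares of units. -/
theorem TP_unit_sq {u : R} (hu : IsUnit u) (h : TP u) : ∃ w : R, IsUnit w ∧ u = w ^ 2 := by
  have h1 := (TP_iff u).1 h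
  have h2 := (isUnit_iff u).1 hu
  have h3 : u.norm = 1 := by omega
  let a : Pell.Solution₁ 2 := ⟨u, Zsqrtd.norm_eq_one_iff_mem_unitary.1 h3⟩
  let e : Pell.Solution₁ 2 := Pell.Solution₁.mk 3 2 (by norm_num)
  have he : Pell.IsFundamental e := by
    refine ⟨by simp [e], by simp [e], ?_⟩
    intro b hb
    have hp := b.prop
    simp only [e, Pell.Solution₁.x_mk]
    by_contra! hlt
    have : b.x = 2 := by omega
    rw [this] at hp
    omega
  let ε : Rˣ := ⟨⟨1, 1⟩, ⟨-1, 1⟩, by ext <;> simp, by ext <;> simp⟩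
  have hε : (e : R) = ((ε ^ 2 : Rˣ) : R) := by ext <;> simp [e, ε, pow_two]
  have hε1 : ((e⁻¹ : Pell.Solution₁ 2) : R) = (((ε ^ 2)⁻¹ : Rˣ) : R) := by
    have hh : (e : R) * ((e⁻¹ : Pell.Solution₁ 2) : R) = 1 := by
      have : ((e * e⁻¹ : Pell.Solution₁ 2) : R) = 1 := by rw [mul_inv_cancel]; rfl
      exact this
    rw [hε] at hh
    exact (Units.eq_inv_of_mul_eq_one_right hh)
  have hpow : ∀ n : ℤ, ((e ^ n : Pell.Solution₁ 2) : R) = (((ε ^ n) ^ 2 : Rˣ) : R) := by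
    intro n
    have h0 : ∀ (c : Pell.Solution₁ 2) (v : Rˣ), (c : R) = v → ∀ k : ℕ,
        ((c ^ k : Pell.Solution₁ 2) : R) = ((v ^ k : Rˣ) : R) := by
      intro c v hc k
      have : ((c ^ k : Pell.Solution₁ 2) : R) = (c : R) ^ k := rfl
      rw [this, hc, Units.val_pow_eq_pow_val]
    rcases Int.eq_nat_or_neg n with ⟨k, rfl | rfl⟩
    · rw [zpow_natCast, h0 e _ hε]
      congr 1
      rw [zpow_natCast, ← pow_mul, ← pow_mul, mul_comm]
    · rw [zpow_neg, zpow_natCast, ← inv_pow, h0 _ _ hε1]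
      congr 1
      rw [zpow_neg, zpow_natCast, ← inv_pow, ← inv_pow, ← pow_mul, ← pow_mul, mul_comm]
  obtain ⟨n, hn⟩ := he.eq_zpow_or_neg_zpow a
  have hE := hpow n
  refine ⟨((ε ^ n : Rˣ) : R), Units.isUnit _, ?_⟩
  rcases hn with hn | hn
  · have : u = (a : R) := rfl
    rw [this, hn, hE, Units.val_pow_eq_pow_val]
  · exfalso
    have : u = -((e ^ n : Pell.Solution₁ 2) : R) := by
      have h' : u = (a : R) := rfl
      rw [h', hn]; rfl
    rw [hE, Units.val_pow_eq_pow_val] at this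
    have hp : TP (u + ((ε ^ n : Rˣ) : R) ^ 2) := h.add (TP_sq (Units.ne_zero _))
    rw [this] at hp
    exact hp.ne_zero (by ring)

/-- Every nonzero element has a totally positive associate. -/
theorem exists_unit_TP {g : R} (hg : g ≠ 0) : ∃ u : R, IsUnit u ∧ TP (u * g) := by
  have hn : g.norm ≠ 0 := fun h => hg (norm_eq_zero.1 h)
  have main : ∀ g : R, 0 < g.norm → ∃ u : R, IsUnit u ∧ TP (u * g) := by
    intro g hg
    rcases lt_trichotomy g.re 0 with h | h | h
    · exact ⟨-1, by simp, (TP_iff _).2 ⟨by simpa using h, by simpa using hg⟩⟩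
    · rw [norm_eq, h] at hg; nlinarith [sq_nonneg g.im]
    · exact ⟨1, by simp, (TP_iff _).2 ⟨by simpa using h, by simpa using hg⟩⟩
  rcases lt_or_gt_of_ne hn with h | h
  · have hu : ((⟨1, 1⟩ : R)).norm = -1 := by simp [norm_eq]
    obtain ⟨u, h1, h2⟩ := main (⟨1, 1⟩ * g) (by rw [Zsqrtd.norm_mul, hu]; linarith)
    exact ⟨u * ⟨1, 1⟩, h1.mul ((isUnit_iff _).2 (by rw [hu]; rfl)), by rwa [mul_assoc]⟩
  · exact main g h

end QO

/-! ### Minkowski's theorem over `ℤ[√2]` -/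

namespace QO
open MeasureTheory Module

theorem volume_sum_sq_lt {ι : Type*} [Fintype ι] [Nonempty ι] {k : ℕ}
    (hk : Fintype.card ι = 2 * k) {ρ : ℝ} (hρ : 0 < ρ) :
    volume {x : ι → ℝ | ∑ i, x i ^ 2 < ρ} =
      ENNReal.ofReal (ρ ^ k * (Real.pi ^ k / (k.factorial : ℝ))) := by
  have h2 := InnerProductSpace.volume_ball_of_dim_even (E := EuclideanSpace ℝ ι) (k := k)
    (by simp [hk]) 0 (√ρ)
  rw [← EuclideanSpace.volume_preserving_symm_measurableEquiv_toLp ι |>.measure_preimage_equiv]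
  have e : (MeasurableEquiv.toLp 2 (ι → ℝ)).symm ⁻¹' {x : ι → ℝ | ∑ i, x i ^ 2 < ρ}
      = Metric.ball (0 : EuclideanSpace ℝ ι) (√ρ) := by
    ext x
    simp [EuclideanSpace.norm_eq, Real.sqrt_lt_sqrt_iff (Finset.sum_nonneg (fun i _ => sq_nonneg (x i)))]
  rw [e, h2, finrank_euclideanSpace, hk, ENNReal.ofReal_mul (by positivity),
    ENNReal.ofReal_pow hρ.le, pow_mul, ← ENNReal.ofReal_pow (Real.sqrt_nonneg _), Real.sq_sqrt hρ.le]

theorem convex_sum_sq_lt {ι : Type*} [Fintype ι] (ρ : ℝ) :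
    Convex ℝ {x : ι → ℝ | ∑ i, x i ^ 2 < ρ} := by
  have : ConvexOn ℝ Set.univ (fun x : ι → ℝ => ∑ i, x i ^ 2) := by
    refine ⟨convex_univ, ?_⟩
    intro x _ y _ a b ha hb hab
    simp only [Pi.add_apply, Pi.smul_apply, smul_eq_mul, Finset.mul_sum]
    rw [← Finset.sum_add_distrib]
    refine Finset.sum_le_sum fun i _ => ?_
    obtain rfl : b = 1 - a := by linarith
    nlinarith [mul_nonneg (mul_nonneg ha hb) (sq_nonneg (x i - y i))]
  simpa using this.convex_lt ρ

/-- Minkowski's theorem for the ellipsoid `‖M z‖² < ρ`. -/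
theorem exists_int_vec {ι : Type*} [Fintype ι] [DecidableEq ι] [Nonempty ι] {k : ℕ}
    (hk : Fintype.card ι = 2 * k) (M : Matrix ι ι ℝ) (hM : M.det ≠ 0) {ρ : ℝ} (hρ : 0 < ρ)
    (h : 2 ^ (2 * k) * |M.det| < ρ ^ k * (Real.pi ^ k / (k.factorial : ℝ))) :
    ∃ z : ι → ℤ, z ≠ 0 ∧ ∑ i, (M.mulVec (fun j => (z j : ℝ)) i) ^ 2 < ρ := by
  classical
  set S := {x : ι → ℝ | ∑ i, x i ^ 2 < ρ} with hS
  have hdet : LinearMap.det (Matrix.toLin' M) ≠ 0 := by rwa [LinearMap.det_toLin']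
  have hvol := Measure.addHaar_preimage_linearMap volume hdet S
  have hF : volume (ZSpan.fundamentalDomain (Pi.basisFun ℝ ι)) = 1 := by
    rw [ZSpan.volume_fundamentalDomain]
    have : Matrix.of (Pi.basisFun ℝ ι) = 1 := by
      ext i j; simp [Matrix.one_apply, Pi.single_apply, eq_comm]
    rw [this]; simp
  have hlt : volume (ZSpan.fundamentalDomain (Pi.basisFun ℝ ι)) * 2 ^ finrank ℝ (ι → ℝ) <
      volume (Matrix.toLin' M ⁻¹' S) := by
    rw [hF, hvol, hS, volume_sum_sq_lt hk hρ, LinearMap.det_toLin', one_mul, finrank_pi, hk,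
      ← ENNReal.ofReal_mul (abs_nonneg _)]
    have : (2 : ENNReal) ^ (2 * k) = ENNReal.ofReal (2 ^ (2 * k)) := by
      rw [ENNReal.ofReal_pow (by norm_num)]; simp
    rw [this, ENNReal.ofReal_lt_ofReal_iff_of_nonneg (by positivity), abs_inv,
      ← mul_lt_mul_iff_left₀ (abs_pos.2 hM)]
    have := abs_pos.2 hM
    calc _ < _ := h
      _ = _ := by field_simp
  have : Countable (Submodule.span ℤ (Set.range (Pi.basisFun ℝ ι))).toAddSubgroup :=
    inferInstanceAs (Countable (Submodule.span ℤ (Set.range (Pi.basisFun ℝ ι))))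
  obtain ⟨x, hx0, hx⟩ := exists_ne_zero_mem_lattice_of_measure_mul_two_pow_lt_measure
    (ZSpan.isAddFundamentalDomain' (Pi.basisFun ℝ ι) volume)
    (s := Matrix.toLin' M ⁻¹' S) (by
      intro x hx
      simpa [hS, Matrix.mulVec_neg] using hx) ((convex_sum_sq_lt ρ).linear_preimage _) hlt
  have hxm : ∀ i, ∃ z : ℤ, (x : ι → ℝ) i = z := by
    have hx' : (x : ι → ℝ) ∈ Submodule.span ℤ (Set.range (Pi.basisFun ℝ ι)) := x.2
    rw [(Pi.basisFun ℝ ι).mem_span_iff_repr_mem ℤ] at hx'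
    intro i
    obtain ⟨z, hz⟩ := hx' i
    exact ⟨z, by simpa using hz.symm⟩
  choose z hz using hxm
  refine ⟨z, ?_, ?_⟩
  · rintro rfl
    apply hx0
    ext i
    simpa using hz i
  · have e : (fun j => (z j : ℝ)) = (x : ι → ℝ) := by ext i; rw [hz]
    rw [e]
    simpa [hS] using hx

/-- The real `2n × 2n` matrix of `u ↦ (C₁ u, C₂ u')` on `ℤ[√2]ⁿ = ℤⁿ ⊕ ℤⁿ √2`, where `u'` is the
conjugate of `u`. -/
noncomputable def bigM {n : ℕ} (C1 C2 : Matrix (Fin n) (Fin n) ℝ) :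
    Matrix (Fin n ⊕ Fin n) (Fin n ⊕ Fin n) ℝ :=
  Matrix.fromBlocks C1 (√2 • C1) C2 (-√2 • C2)

theorem det_bigM {n : ℕ} (C1 C2 : Matrix (Fin n) (Fin n) ℝ) :
    |(bigM C1 C2).det| = (2 * √2) ^ n * |C1.det * C2.det| := by
  have e : bigM C1 C2 = Matrix.fromBlocks C1 0 0 C2 *
      Matrix.fromBlocks 1 ((√2) • 1) 1 ((-√2) • 1) := by
    rw [Matrix.fromBlocks_multiply]
    simp [bigM]
  rw [e, Matrix.det_mul, Matrix.det_fromBlocks_zero₂₁, Matrix.det_fromBlocks_one₁₁, abs_mul, mul_comm]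
  congr 1
  have : (-√2) • (1 : Matrix (Fin n) (Fin n) ℝ) - 1 * (√2 • 1) = (-(2 * √2)) • 1 := by
    rw [one_mul, ← sub_smul]; congr 1; ring
  rw [this, Matrix.det_smul, Matrix.det_one, mul_one, Fintype.card_fin, abs_pow, abs_neg,
    abs_of_pos (by positivity)]

/-- Minkowski's theorem for `ℤ[√2]ⁿ` and a pair of ellipsoids at the two real places. -/
theorem exists_vec {n : ℕ} [NeZero n] (C1 C2 : Matrix (Fin n) (Fin n) ℝ) (hC : C1.det * C2.det ≠ 0)
    {ρ : ℝ} (hρ : 0 < ρ)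
    (h : 2 ^ (2 * n) * ((2 * √2) ^ n * |C1.det * C2.det|) <
      ρ ^ n * (Real.pi ^ n / (n.factorial : ℝ))) :
    ∃ u : Fin n → R, u ≠ 0 ∧ ∑ i, (C1.mulVec (fun j => s1 (u j)) i) ^ 2 +
      ∑ i, (C2.mulVec (fun j => s2 (u j)) i) ^ 2 < ρ := by
  have hd := det_bigM C1 C2
  obtain ⟨z, hz0, hz⟩ := exists_int_vec (ι := Fin n ⊕ Fin n) (k := n) (by simp; ring) (bigM C1 C2)
    (by
      rw [← abs_pos, hd]
      have := abs_pos.2 hC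
      positivity) hρ (by rwa [hd])
  refine ⟨fun j => ⟨z (Sum.inl j), z (Sum.inr j)⟩, ?_, ?_⟩
  · intro h0
    apply hz0
    ext j
    rcases j with j | j
    · exact congrArg Zsqrtd.re (congrFun h0 j)
    · exact congrArg Zsqrtd.im (congrFun h0 j)
  · have e : (fun j => (z j : ℝ)) = Sum.elim (fun j => (z (Sum.inl j) : ℝ))
      (fun j => (z (Sum.inr j) : ℝ)) := by ext (j | j) <;> rfl
    rw [e, bigM, Matrix.fromBlocks_mulVec, Fintype.sum_sum_type] at hz
    refine lt_of_eq_of_lt ?_ hz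
    congr 1
    · refine Finset.sum_congr rfl fun i _ => ?_
      congr 1
      simp only [Sum.elim_inl, s1_apply, Pi.add_apply, Matrix.mulVec, dotProduct, Matrix.smul_apply,
        smul_eq_mul, ← Finset.sum_add_distrib, Function.comp, Sum.elim_inr]
      exact Finset.sum_congr rfl fun j _ => by ring
    · refine Finset.sum_congr rfl fun i _ => ?_
      congr 1
      simp only [Sum.elim_inl, s2_apply, Pi.add_apply, Matrix.mulVec, dotProduct, Matrix.smul_apply,
        smul_eq_mul, ← Finset.sum_add_distrib, Function.comp, Sum.elim_inr]
      exact Finset.sum_congr rfl fun j _ => by ring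
end QO

/-! ### Small values of totally positive definite forms -/

namespace QO
open Matrix

/-- Cholesky factorisation of a positive definite binary form. -/
theorem chol2 {A F B : ℝ} (hA : 0 < A) (hd : 0 < A * B - F ^ 2) :
    ∃ C : Matrix (Fin 2) (Fin 2) ℝ, C.det ^ 2 = A * B - F ^ 2 ∧
      ∀ v : Fin 2 → ℝ, ∑ i, (C.mulVec v i) ^ 2 =
        A * v 0 ^ 2 + 2 * F * v 0 * v 1 + B * v 1 ^ 2 := by
  have h1 : √A ^ 2 = A := Real.sq_sqrt hA.le
  have h2 : √((A * B - F ^ 2) / A) ^ 2 = (A * B - F ^ 2) / A := Real.sq_sqrt (by positivity)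
  have h3 : √A ≠ 0 := by positivity
  refine ⟨!![√A, F / √A; 0, √((A * B - F ^ 2) / A)], ?_, ?_⟩
  · rw [Matrix.det_fin_two]
    simp only [of_apply, cons_val', cons_val_zero, cons_val_one, cons_val_fin_one, mul_zero,
      sub_zero, mul_pow, h1, h2]
    field_simp
  · intro v
    simp only [Fin.sum_univ_two, mulVec, dotProduct, of_apply, cons_val', cons_val_zero,
      cons_val_one, cons_val_fin_one, zero_mul, zero_add, mul_pow, h2]
    have : (√A * v 0 + F / √A * v 1) ^ 2 = A * v 0 ^ 2 + 2 * F * v 0 * v 1 + F ^ 2 / A * v 1 ^ 2 := by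
      field_simp
      rw [h1]
      ring
    rw [this]
    field_simp
    ring

/-- Cholesky factorisation of a positive definite ternary form. -/
theorem chol3 {A B C D E F : ℝ} (hA : 0 < A) (hd : 0 < A * B - F ^ 2)
    (hD : 0 < A * B * C + 2 * D * E * F - A * D ^ 2 - B * E ^ 2 - C * F ^ 2) :
    ∃ T : Matrix (Fin 3) (Fin 3) ℝ,
      T.det ^ 2 = A * B * C + 2 * D * E * F - A * D ^ 2 - B * E ^ 2 - C * F ^ 2 ∧
      ∀ v : Fin 3 → ℝ, ∑ i, (T.mulVec v i) ^ 2 =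
        A * v 0 ^ 2 + B * v 1 ^ 2 + C * v 2 ^ 2 + 2 * D * v 1 * v 2 + 2 * E * v 0 * v 2
          + 2 * F * v 0 * v 1 := by
  set δ := A * B - F ^ 2 with hδ
  set Δ := A * B * C + 2 * D * E * F - A * D ^ 2 - B * E ^ 2 - C * F ^ 2 with hΔ
  have h1 : √A ^ 2 = A := Real.sq_sqrt hA.le
  have h2 : √(δ / A) ^ 2 = δ / A := Real.sq_sqrt (by positivity)
  have h4 : √(Δ / δ) ^ 2 = Δ / δ := Real.sq_sqrt (by positivity)
  have h3 : √A ≠ 0 := by positivity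
  refine ⟨!![√A, F / √A, E / √A; 0, √(δ / A), √(δ / A) * ((A * D - E * F) / δ); 0, 0, √(Δ / δ)],
    ?_, ?_⟩
  · rw [Matrix.det_fin_three]
    simp [mul_pow, h1, h2, h4]
    field_simp
  · intro v
    simp only [Fin.sum_univ_three, mulVec, dotProduct, of_apply, cons_val', cons_val_zero,
      cons_val_one, cons_val_fin_one, cons_val, zero_mul, zero_add]
    have e1 : (√A * v 0 + F / √A * v 1 + E / √A * v 2) ^ 2 =
        (A * v 0 + F * v 1 + E * v 2) ^ 2 / A := by
      field_simp
      rw [h1]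
      ring
    have e2 : (√(δ / A) * v 1 + √(δ / A) * ((A * D - E * F) / δ) * v 2) ^ 2 =
        δ / A * (v 1 + (A * D - E * F) / δ * v 2) ^ 2 := by
      linear_combination (v 1 + (A * D - E * F) / δ * v 2) ^ 2 * h2
    rw [e1, e2, mul_pow, h4]
    have hAne := hA.ne'
    have hδne := hd.ne'
    field_simp
    rw [hΔ, hδ]
    ring

/-- Minkowski's bound for a totally positive definite binary form of determinant `AB - F²`; the
constants come from `π > 3`. -/
theorem exists_small2 {A F B : R} (hA : TP A) (hd : TP (A * B - F ^ 2)) {ρ : ℝ} (hρ : 0 < ρ)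
    (h : 128 ^ 2 * ((A * B - F ^ 2).norm : ℝ) < (9 / 2 * ρ ^ 2) ^ 2) :
    ∃ x y : R, (x ≠ 0 ∨ y ≠ 0) ∧ 2 * ((A * x ^ 2 + 2 * F * x * y + B * y ^ 2).re : ℝ) < ρ := by
  obtain ⟨C1, hC1, hf1⟩ := chol2 (A := s1 A) (F := s1 F) (B := s1 B) hA.1 (by simpa using hd.1)
  obtain ⟨C2, hC2, hf2⟩ := chol2 (A := s2 A) (F := s2 F) (B := s2 B) hA.2 (by simpa using hd.2)
  have hdet : (C1.det * C2.det) ^ 2 = (A * B - F ^ 2).norm := by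
    rw [← s1_mul_s2, mul_pow, hC1, hC2]; simp
  have hpos : (0:ℝ) < (A * B - F ^ 2).norm := by
    exact_mod_cast ((TP_iff _).1 hd).2
  have hs2 : √2 ^ 2 = 2 := by norm_num
  obtain ⟨u, hu, hlt⟩ := exists_vec C1 C2 (by intro h0; rw [h0] at hdet; simp at hdet; linarith) hρ (by
    have e : |C1.det * C2.det| * 128 < 9 / 2 * ρ ^ 2 := by
      apply lt_of_pow_lt_pow_left₀ 2 (by positivity)
      rw [mul_pow, sq_abs, hdet]; linarith
    have hpi := Real.pi_gt_three
    have : 9 < Real.pi ^ 2 := by nlinarith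
    norm_num [mul_pow, Nat.factorial]
    have hρ2 : 0 < ρ ^ 2 := by positivity
    rw [abs_mul] at e
    nlinarith)
  refine ⟨u 0, u 1, ?_, ?_⟩
  · by_contra! h0
    exact hu (by ext1 i; fin_cases i <;> simp [h0.1, h0.2])
  · rw [hf1, hf2] at hlt
    rw [← s1_add_s2]
    simpa using hlt

/-- The quadratic form `u ↦ uᵀ G u`. -/
def Q {n : ℕ} (G : Matrix (Fin n) (Fin n) R) (u : Fin n → R) : R := u ⬝ᵥ G *ᵥ u

theorem Q_three {G : Matrix (Fin 3) (Fin 3) R} (hG : Gᵀ = G) (u : Fin 3 → R) :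
    Q G u = G 0 0 * u 0 ^ 2 + G 1 1 * u 1 ^ 2 + G 2 2 * u 2 ^ 2 + 2 * G 1 2 * u 1 * u 2
      + 2 * G 0 2 * u 0 * u 2 + 2 * G 0 1 * u 0 * u 1 := by
  have h01 : G 1 0 = G 0 1 := congrFun (congrFun hG 0) 1
  have h02 : G 2 0 = G 0 2 := congrFun (congrFun hG 0) 2
  have h12 : G 2 1 = G 1 2 := congrFun (congrFun hG 1) 2
  simp only [Q, dotProduct, mulVec, Fin.sum_univ_three, h01, h02, h12]
  ring

theorem det_three {G : Matrix (Fin 3) (Fin 3) R} (hG : Gᵀ = G) :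
    G.det = G 0 0 * G 1 1 * G 2 2 + 2 * G 1 2 * G 0 2 * G 0 1 - G 0 0 * G 1 2 ^ 2
      - G 1 1 * G 0 2 ^ 2 - G 2 2 * G 0 1 ^ 2 := by
  have h01 : G 1 0 = G 0 1 := congrFun (congrFun hG 0) 1
  have h02 : G 2 0 = G 0 2 := congrFun (congrFun hG 0) 2
  have h12 : G 2 1 = G 1 2 := congrFun (congrFun hG 1) 2
  rw [Matrix.det_fin_three, h01, h02, h12]
  ring

theorem Q_conj {n : ℕ} (G P : Matrix (Fin n) (Fin n) R) (u : Fin n → R) :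
    Q (Pᵀ * G * P) u = Q G (P *ᵥ u) := by
  simp only [Q]
  rw [Matrix.dotProduct_mulVec, Matrix.mul_assoc, ← Matrix.vecMul_vecMul, Matrix.vecMul_transpose,
    ← Matrix.vecMul_vecMul, ← Matrix.dotProduct_mulVec, ← Matrix.dotProduct_mulVec]

theorem mulVec_ne_zero {n : ℕ} {P : Matrix (Fin n) (Fin n) R} (hP : P.det ≠ 0) {u : Fin n → R}
    (hu : u ≠ 0) : P *ᵥ u ≠ 0 := by
  intro h
  exact hP (Matrix.exists_mulVec_eq_zero_iff.1 ⟨u, hu, h⟩)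

/-- A totally positive definite symmetric matrix over `ℤ[√2]`. -/
structure PD {n : ℕ} (G : Matrix (Fin n) (Fin n) R) : Prop where
  symm : Gᵀ = G
  pos : ∀ u, u ≠ 0 → TP (Q G u)

theorem PD.conj {n : ℕ} {G P : Matrix (Fin n) (Fin n) R} (h : PD G) (hP : P.det ≠ 0) :
    PD (Pᵀ * G * P) where
  symm := by simp [Matrix.transpose_mul, h.symm, Matrix.mul_assoc]
  pos u hu := by rw [Q_conj]; exact h.pos _ (mulVec_ne_zero hP hu)

theorem PD.A {G : Matrix (Fin 3) (Fin 3) R} (h : PD G) : TP (G 0 0) := by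
  have := h.pos ![1, 0, 0] (by intro h; simpa using congrFun h 0)
  simpa [Q_three h.symm] using this

theorem PD.δ {G : Matrix (Fin 3) (Fin 3) R} (h : PD G) : TP (G 0 0 * G 1 1 - G 0 1 ^ 2) := by
  have hA := h.A
  have := h.pos ![-G 0 1, G 0 0, 0] (by intro h; exact hA.ne_zero (by simpa using congrFun h 1))
  refine hA.of_mul ?_
  convert this using 1
  simp [Q_three h.symm]
  ring

theorem PD.det {G : Matrix (Fin 3) (Fin 3) R} (h : PD G) : TP G.det := by
  have hd := h.δ
  have := h.pos ![G 0 1 * G 1 2 - G 0 2 * G 1 1, G 0 1 * G 0 2 - G 0 0 * G 1 2,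
    G 0 0 * G 1 1 - G 0 1 ^ 2] (by intro h; exact hd.ne_zero (by simpa using congrFun h 2))
  refine hd.of_mul ?_
  convert this using 1
  rw [Q_three h.symm, det_three h.symm]
  simp
  ring

/-- Minkowski's bound for a totally positive definite ternary form of determinant of norm at most
`16`. -/
theorem exists_small3 {G : Matrix (Fin 3) (Fin 3) R} (hG : PD G) (h : G.det.norm ≤ 16) :
    ∃ u : Fin 3 → R, u ≠ 0 ∧ (Q G u).re ≤ 5 := by
  have hA := hG.A
  have hδ := hG.δ
  have hD := hG.det
  have hDn : (0:ℝ) < G.det.norm := by exact_mod_cast ((TP_iff _).1 hD).2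
  have hDn' : (G.det.norm : ℝ) ≤ 16 := by exact_mod_cast h
  have hdet := det_three hG.symm
  rw [hdet] at hD
  obtain ⟨C1, hC1, hf1⟩ := chol3 (A := s1 (G 0 0)) (B := s1 (G 1 1)) (C := s1 (G 2 2))
    (D := s1 (G 1 2)) (E := s1 (G 0 2)) (F := s1 (G 0 1)) hA.1 (by simpa using hδ.1)
    (by simpa using hD.1)
  obtain ⟨C2, hC2, hf2⟩ := chol3 (A := s2 (G 0 0)) (B := s2 (G 1 1)) (C := s2 (G 2 2))
    (D := s2 (G 1 2)) (E := s2 (G 0 2)) (F := s2 (G 0 1)) hA.2 (by simpa using hδ.2)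
    (by simpa using hD.2)
  have hcc : (C1.det * C2.det) ^ 2 = G.det.norm := by
    rw [← s1_mul_s2, mul_pow, hC1, hC2, hdet]; simp
  have hs2 : √2 ^ 2 = 2 := by norm_num
  obtain ⟨u, hu, hlt⟩ := exists_vec C1 C2
      (by intro h0; rw [h0] at hcc; simp at hcc; linarith) (ρ := 12) (by norm_num) (by
    have e : |C1.det * C2.det| ≤ 4 := by
      apply le_of_sq_le_sq ?_ (by norm_num)
      rw [sq_abs, hcc]; linarith
    have hpi := Real.pi_gt_three
    have : 27 < Real.pi ^ 3 := by
      have : (3:ℝ) ^ 3 < Real.pi ^ 3 := by gcongr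
      linarith
    have h5 : √2 < 1.5 := by
      rw [Real.sqrt_lt' (by norm_num)]; norm_num
    have h6 : (2 * √2) ^ 3 = 16 * √2 := by
      have : (2 * √2) ^ 3 = 8 * √2 * √2 ^ 2 := by ring
      rw [this, hs2]; ring
    rw [h6]
    norm_num [Nat.factorial]
    rw [← abs_mul]
    nlinarith [abs_nonneg (C1.det * C2.det), Real.sqrt_nonneg 2])
  refine ⟨u, hu, ?_⟩
  rw [hf1, hf2] at hlt
  have e := s1_add_s2 (Q G u)
  rw [Q_three hG.symm] at e ⊢
  have : 2 * ((G 0 0 * u 0 ^ 2 + G 1 1 * u 1 ^ 2 + G 2 2 * u 2 ^ 2 + 2 * G 1 2 * u 1 * u 2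
      + 2 * G 0 2 * u 0 * u 2 + 2 * G 0 1 * u 0 * u 1).re : ℝ) < 12 := by
    rw [← e]; simpa using hlt
  have h2 : 2 * (G 0 0 * u 0 ^ 2 + G 1 1 * u 1 ^ 2 + G 2 2 * u 2 ^ 2 + 2 * G 1 2 * u 1 * u 2
      + 2 * G 0 2 * u 0 * u 2 + 2 * G 0 1 * u 0 * u 1).re < 12 := by exact_mod_cast this
  omega
end QO

/-! ### Unimodular ternary forms -/

namespace QO
open Matrix

/-- `n` is a sum of three squares in `ℚ(√2)`, with denominators cleared. -/
def ThreeSq (n : R) : Prop := ∃ d x y z : R, d ≠ 0 ∧ d ^ 2 * n = x ^ 2 + y ^ 2 + z ^ 2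

/-- Modulo `2`, the form `Q G` is additive (as `G` is symmetric) and vanishes on multiples of `√2`, and
`ℤ[√2] / 2` has four elements; a pigeonhole argument gives a sublattice with basis matrix `P`, where
`(det P)² = 4`, on which `Q G` is even. -/
theorem exists_even_sublattice {G : Matrix (Fin 3) (Fin 3) R} (hG : Gᵀ = G) :
    ∃ P : Matrix (Fin 3) (Fin 3) R, P.det ^ 2 = 4 ∧ ∀ u, 2 ∣ Q (Pᵀ * G * P) u := by
  have h10 : G 1 0 = G 0 1 := congrFun (congrFun hG 0) 1
  have h20 : G 2 0 = G 0 2 := congrFun (congrFun hG 0) 2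
  have h21 : G 2 1 = G 1 2 := congrFun (congrFun hG 1) 2
  by_cases h2 : 2 ∣ G 2 2
  · refine ⟨!![rt, 0, 0; 0, rt, 0; 0, 0, 1], ?_, fun u => ?_⟩
    · rw [det_fin_three]; simp [mul_pow]; norm_num
    · obtain ⟨k, hk⟩ := h2
      rw [Q_conj, Q_three hG]
      simp [Matrix.mulVec, dotProduct, Fin.sum_univ_three, hk, mul_pow]
      exact ⟨G 0 0 * u 0 ^ 2 + G 1 1 * u 1 ^ 2 + k * u 2 ^ 2 + G 1 2 * (rt * u 1) * u 2 +
        G 0 2 * (rt * u 0) * u 2 + G 0 1 * (rt * u 0) * (rt * u 1), by ring⟩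
  by_cases h1 : ∃ w : R, 2 ∣ G 1 1 + w ^ 2 * G 2 2
  · obtain ⟨w, k, hk⟩ := h1
    refine ⟨!![rt, 0, 0; 0, 1, 0; 0, w, rt], ?_, fun u => ?_⟩
    · rw [det_fin_three]; simp [mul_pow]; norm_num
    · rw [Q_conj, Q_three hG]
      simp [Matrix.mulVec, dotProduct, Fin.sum_univ_three, mul_pow]
      refine ⟨G 0 0 * u 0 ^ 2 + k * u 1 ^ 2 + G 2 2 * (w * u 1 * rt * u 2 + u 2 ^ 2)
        + G 1 2 * u 1 * (w * u 1 + rt * u 2) +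
        G 0 2 * (rt * u 0) * (w * u 1 + rt * u 2) + G 0 1 * (rt * u 0) * u 1, ?_⟩
      linear_combination u 1 ^ 2 * hk + G 2 2 * u 2 ^ 2 * rt_sq
  have h0 : ∃ w1 w2 : R, 2 ∣ G 0 0 + w1 ^ 2 * G 1 1 + w2 ^ 2 * G 2 2 := by
    simp only [two_dvd_iff] at h1 h2 ⊢
    have a1 := fun h => h1 ⟨0, h⟩
    have a2 := fun h => h1 ⟨1, h⟩
    by_contra! hc
    have b00 := fun h => hc 0 0 h
    have b01 := fun h => hc 0 1 h
    have b10 := fun h => hc 1 0 h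
    have b11 := fun h => hc 1 1 h
    clear hc h1
    simp at a1 a2 b00 b01 b10 b11
    omega
  obtain ⟨w1, w2, k, hk⟩ := h0
  refine ⟨!![1, 0, 0; w1, rt, 0; w2, 0, rt], ?_, fun u => ?_⟩
  · rw [det_fin_three]; simp [mul_pow]; norm_num
  · rw [Q_conj, Q_three hG]
    simp [Matrix.mulVec, dotProduct, Fin.sum_univ_three]
    refine ⟨k * u 0 ^ 2 + G 1 1 * (w1 * u 0 * rt * u 1 + u 1 ^ 2)
      + G 2 2 * (w2 * u 0 * rt * u 2 + u 2 ^ 2)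
      + G 1 2 * (w1 * u 0 + rt * u 1) * (w2 * u 0 + rt * u 2) +
      G 0 2 * u 0 * (w2 * u 0 + rt * u 2) + G 0 1 * u 0 * (w1 * u 0 + rt * u 1), ?_⟩
    linear_combination u 0 ^ 2 * hk + (G 2 2 * u 2 ^ 2 + G 1 1 * u 1 ^ 2) * rt_sq

theorem exists_gcd (x y : R) (h : x ≠ 0 ∨ y ≠ 0) :
    ∃ d a b p q : R, d ≠ 0 ∧ x = d * a ∧ y = d * b ∧ a * p + b * q = 1 := by
  obtain ⟨d, hd⟩ := (IsPrincipalIdealRing.principal (Ideal.span {x, y})).principal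
  have hx : x ∈ Ideal.span {x, y} := Ideal.subset_span (by simp)
  have hy : y ∈ Ideal.span {x, y} := Ideal.subset_span (by simp)
  have hdm : d ∈ Ideal.span {x, y} := by rw [hd]; exact Submodule.mem_span_singleton_self d
  rw [hd] at hx hy
  obtain ⟨a, ha⟩ := Ideal.mem_span_singleton'.1 hx
  obtain ⟨b, hb⟩ := Ideal.mem_span_singleton'.1 hy
  obtain ⟨p, q, hpq⟩ := Ideal.mem_span_pair.1 hdm
  have hd0 : d ≠ 0 := by
    rintro rfl
    simp at ha hb
    rcases h with h | h
    · exact h ha.symm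
    · exact h hb.symm
  refine ⟨d, a, b, p, q, hd0, by rw [← ha, mul_comm], by rw [← hb, mul_comm], ?_⟩
  apply mul_left_cancel₀ hd0
  rw [← ha, ← hb] at hpq
  linear_combination hpq

/-- A nonzero vector of `ℤ[√2]³` is a multiple of the first column of a matrix of determinant 1. -/
theorem exists_primitive (v : Fin 3 → R) (hv : v ≠ 0) :
    ∃ (g : R) (U : Matrix (Fin 3) (Fin 3) R), g ≠ 0 ∧ U.det = 1 ∧ v = U *ᵥ ![g, 0, 0] := by
  by_cases h : v 0 = 0 ∧ v 1 = 0
  · refine ⟨v 2, !![0, 1, 0; 0, 0, 1; 1, 0, 0], ?_, ?_, ?_⟩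
    · intro h2
      exact hv (by ext1 i; fin_cases i <;> simp [h.1, h.2, h2])
    · simp [det_fin_three]
    · ext1 i; fin_cases i <;> simp [h.1, h.2, Matrix.mulVec, dotProduct, Fin.sum_univ_three]
  · obtain ⟨d, a, b, p, q, hd, hx, hy, hpq⟩ := exists_gcd (v 0) (v 1) (by tauto)
    obtain ⟨g, e, z, r, s, hg, hd', hz, hrs⟩ := exists_gcd d (v 2) (Or.inl hd)
    refine ⟨g, !![e * a, -q, -s * a; e * b, p, -s * b; z, 0, r], hg, ?_, ?_⟩
    · simp [det_fin_three]
      linear_combination hrs + (e * r + s * z) * hpq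
    · ext1 i; fin_cases i <;> simp [Matrix.mulVec, dotProduct, Fin.sum_univ_three]
      · rw [hx, hd']; ring
      · rw [hy, hd']; ring
      · rw [hz]; ring

/-- The ring homomorphism `ℤ[√2] → 𝔽_p` given by a square root `t` of `2`. -/
def phi {p : ℕ} (t : ZMod p) (ht : t * t = 2) : R →+* ZMod p := Zsqrtd.lift ⟨t, by simpa using ht⟩

theorem phi_apply {p : ℕ} (t : ZMod p) (ht : t * t = 2) (x : R) :
    phi t ht x = x.re + x.im * t := by simp [phi]

/-- If `-M` is a non-square modulo the prime `π = ker φ`, a binary form of determinant `M` only takes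
values divisible by `π` at vectors divisible by `π`; such values are then divisible by `π²`. -/
theorem binary_dvd_sq {p : ℕ} [Fact p.Prime] (φ : R →+* ZMod p) (π : R)
    (hker : ∀ x, φ x = 0 → π ∣ x) {a b c M y z : R} (hM : a * c - b ^ 2 = M)
    (hns : ∀ s t : ZMod p, s ^ 2 + φ M * t ^ 2 = 0 → t = 0)
    (hk : φ (a * y ^ 2 + 2 * b * y * z + c * z ^ 2) = 0) :
    π ^ 2 ∣ a * y ^ 2 + 2 * b * y * z + c * z ^ 2 := by
  have hz : φ z = 0 := by
    apply hns (φ (a * y + b * z))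
    rw [← map_pow, ← map_pow, ← map_mul, ← map_add, ← hM]
    have : (a * y + b * z) ^ 2 + (a * c - b ^ 2) * z ^ 2 =
      a * (a * y ^ 2 + 2 * b * y * z + c * z ^ 2) := by ring
    rw [this, map_mul, hk, mul_zero]
  have hy : φ y = 0 := by
    apply hns (φ (b * y + c * z))
    rw [← map_pow, ← map_pow, ← map_mul, ← map_add, ← hM]
    have : (b * y + c * z) ^ 2 + (a * c - b ^ 2) * y ^ 2 =
      c * (a * y ^ 2 + 2 * b * y * z + c * z ^ 2) := by ring
    rw [this, map_mul, hk, mul_zero]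
  obtain ⟨y', rfl⟩ := hker _ hy
  obtain ⟨z', rfl⟩ := hker _ hz
  exact ⟨a * y' ^ 2 + 2 * b * y' * z' + c * z' ^ 2, by ring⟩

theorem not_sq_dvd_of_norm {π k : R} (h : ¬ (π.norm ^ 2 ∣ k.norm)) : ¬ π ^ 2 ∣ k := by
  rintro ⟨x, rfl⟩
  apply h
  rw [Zsqrtd.norm_mul, pow_two, pow_two, Zsqrtd.norm_mul]
  exact Dvd.intro _ rfl

/-- Modulo a prime `p ≡ 3 mod 4`, minus a nonzero square is not a square; so if `M` is a square up to
squares and prime to `p`, the form `s² + M t²` is anisotropic modulo `p`. -/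
theorem ns_of_sq {p : ℕ} [Fact p.Prime] (hp : p % 4 = 3) (φ : R →+* ZMod p) {M g h : R}
    (hM : M * g ^ 2 = h ^ 2) (hh : φ h ≠ 0) :
    ∀ s t : ZMod p, s ^ 2 + φ M * t ^ 2 = 0 → t = 0 := by
  intro s t hst
  by_contra ht
  have h1 : φ M * φ g ^ 2 = φ h ^ 2 := by rw [← map_pow, ← map_mul, hM, map_pow]
  have h2 : (s * φ g) ^ 2 + (φ h * t) ^ 2 = 0 := by
    linear_combination φ g ^ 2 * hst - t ^ 2 * h1
  have h3 : φ h * t ≠ 0 := mul_ne_zero hh ht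
  have h4 : IsSquare (-1 : ZMod p) := ⟨s * φ g / (φ h * t), by
    field_simp
    linear_combination (-1 : ZMod p) * h2⟩
  rw [ZMod.exists_sq_eq_neg_one_iff] at h4
  exact h4 hp

/-- If the determinant of a binary form is the square of some `h / g` with `h² ∈ {2, 4}`, a
prime `e - √2` of norm `p ≡ 3 mod 4` cannot divide a value of the form exactly once: `p²` divides the
norm of the value. -/
theorem no_small_prime {p : ℕ} [Fact p.Prime] (hp : p % 4 = 3) (e : ℤ) (he : (p : ℤ) = e ^ 2 - 2)
    {a b c M y z g h : R} (hM : a * c - b ^ 2 = M) (hgh : M * g ^ 2 = h ^ 2)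
    (hh : h ^ 2 = 2 ∨ h ^ 2 = 4) (hk : (e - rt : R) ∣ a * y ^ 2 + 2 * b * y * z + c * z ^ 2) :
    (p : ℤ) ^ 2 ∣ (a * y ^ 2 + 2 * b * y * z + c * z ^ 2).norm := by
  have ht : (e : ZMod p) * e = 2 := by
    have : ((p : ℤ) : ZMod p) = ((e ^ 2 - 2 : ℤ) : ZMod p) := by rw [he]
    push_cast at this
    simp at this
    linear_combination -this
  have hpp : (e - rt : R) * (e + rt) = (p : ℤ) := by
    rw [he]; push_cast; linear_combination - rt_sq
  have hπ : (e - rt : R).norm = p := by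
    rw [he, norm_eq]; simp
  set φ := phi (e : ZMod p) ht with hφ
  have hker : ∀ x, φ x = 0 → (e - rt : R) ∣ x := by
    intro x hx
    rw [hφ, phi_apply] at hx
    have h' : ((x.re + x.im * e : ℤ) : ZMod p) = 0 := by push_cast; exact hx
    rw [ZMod.intCast_zmod_eq_zero_iff_dvd] at h'
    obtain ⟨k, hk⟩ := h'
    refine ⟨(e + rt) * k - x.im, ?_⟩
    have hk' : (x.re + x.im * e : R) = p * k := by exact_mod_cast hk
    have hpp' : (e - rt : R) * (e + rt) = p := by simpa using hpp
    conv_lhs => rw [eta_rt x]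
    linear_combination hk' - k * hpp'
  have hφπ : φ (e - rt) = 0 := by
    rw [hφ, phi_apply]; simp
  have hodd : (2 : ZMod p) ≠ 0 := by
    intro h0
    have : ((2 : ℕ) : ZMod p) = 0 := by exact_mod_cast h0
    rw [ZMod.natCast_eq_zero_iff] at this
    have := Nat.le_of_dvd (by norm_num) this
    omega
  have hφh : φ h ≠ 0 := by
    intro h0
    rcases hh with hh | hh
    · have := congrArg φ hh
      rw [map_pow, h0] at this
      simp at this
      exact hodd ((map_ofNat φ 2).symm.trans this.symm)
    · have := congrArg φ hh
      rw [map_pow, h0, show (4 : R) = 2 * 2 by norm_num, map_mul] at this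
      have e2 : φ 2 = 2 := map_ofNat φ 2
      rw [e2] at this
      simp at this
      exact hodd this
  have := binary_dvd_sq φ _ hker hM (ns_of_sq hp φ hgh hφh) (y := y) (z := z) (by
    obtain ⟨w, hw⟩ := hk
    rw [hw, map_mul, hφπ, zero_mul])
  by_contra hcon
  exact not_sq_dvd_of_norm (π := (e - rt : R)) (by rwa [hπ]) this

instance fact_prime_seven : Fact (Nat.Prime 7) := ⟨by norm_num⟩
instance fact_prime_twentythree : Fact (Nat.Prime 23) := ⟨by norm_num⟩

/-- The totally positive values `k` with `k.re ≤ 5` of a binary form whose determinant is the square of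
some `h / g` with `h² ∈ {2, 4}` are sums of two squares in `ℚ(√2)`: the finitely many
other candidates are exactly divisible by a prime of norm `7` or `23`. -/
theorem value_class_one {a b c M y z g h : R} (hM : a * c - b ^ 2 = M) (hgh : M * g ^ 2 = h ^ 2)
    (hh : h ^ 2 = 2 ∨ h ^ 2 = 4) {k : R} (hk : k = a * y ^ 2 + 2 * b * y * z + c * z ^ 2)
    (hTP : TP k) (hre : k.re ≤ 5) : ∃ d s t : R, d ≠ 0 ∧ d ^ 2 * k = s ^ 2 + t ^ 2 := by
  rw [TP_iff, norm_eq] at hTP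
  have h7 : ∀ e : ℤ, (7 : ℤ) = e ^ 2 - 2 → (e - rt : R) ∣ k → (49 : ℤ) ∣ k.norm := by
    intro e he hd
    rw [hk] at hd ⊢
    exact no_small_prime (p := 7) (by norm_num) e (by exact_mod_cast he) hM hgh hh hd
  have h23 : ∀ e : ℤ, (23 : ℤ) = e ^ 2 - 2 → (e - rt : R) ∣ k → (529 : ℤ) ∣ k.norm := by
    intro e he hd
    rw [hk] at hd ⊢
    exact no_small_prime (p := 23) (by norm_num) e (by exact_mod_cast he) hM hgh hh hd
  clear hk
  obtain ⟨r, i⟩ := k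
  simp only at hTP hre
  obtain ⟨h0, hn⟩ := hTP
  have hi1 : i ≤ 3 := by nlinarith
  have hi2 : -3 ≤ i := by nlinarith
  have fin1 : ∀ r i : ℤ, (∃ s t : R, (⟨r, i⟩ : R) = s ^ 2 + t ^ 2) →
      ∃ d s t : R, d ≠ 0 ∧ d ^ 2 * ⟨r, i⟩ = s ^ 2 + t ^ 2 := by
    rintro r i ⟨s, t, h⟩
    exact ⟨1, s, t, one_ne_zero, by rw [h]; ring⟩
  have ex7 : ∀ (r i : ℤ) (e : ℤ) (x : R), (7 : ℤ) = e ^ 2 - 2 → (⟨r, i⟩ : R) = (e - rt) * x →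
      ((e - rt : R) ∣ ⟨r, i⟩ → (49 : ℤ) ∣ (⟨r, i⟩ : R).norm) → (49 : ℤ) ∣ r ^ 2 - 2 * i ^ 2 := by
    intro r i e x he hx h
    have := h ⟨x, hx⟩
    rwa [norm_eq] at this
  have ex23 : ∀ (r i : ℤ) (e : ℤ) (x : R), (⟨r, i⟩ : R) = (e - rt) * x →
      ((e - rt : R) ∣ ⟨r, i⟩ → (529 : ℤ) ∣ (⟨r, i⟩ : R).norm) → (529 : ℤ) ∣ r ^ 2 - 2 * i ^ 2 := by
    intro r i e x hx h
    have := h ⟨x, hx⟩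
    rwa [norm_eq] at this
  interval_cases r <;> interval_cases i <;> first | (exfalso; norm_num at hn; done) | skip
  · exact fin1 _ _ ⟨1, 0, by ext <;> simp⟩
  · exact ⟨rt, ⟨-1, 1⟩, 1, rt_ne_zero, by rw [rt_sq]; ext <;> simp [pow_two]⟩
  · exact fin1 _ _ ⟨1, 1, by ext <;> simp⟩
  · exact ⟨rt, ⟨1, 1⟩, 1, rt_ne_zero, by rw [rt_sq]; ext <;> simp [pow_two]⟩
  · exact fin1 _ _ ⟨⟨-1, 1⟩, 0, by ext <;> simp [pow_two]⟩
  · have := ex7 3 (-1) 3 1 (by norm_num) (by ext <;> simp) (h7 3 (by norm_num))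
    norm_num at this
  · exact fin1 _ _ ⟨1, rt, by ext <;> simp [pow_two]⟩
  · have := ex7 3 1 (-3) (-1) (by norm_num) (by ext <;> simp) (h7 (-3) (by norm_num))
    norm_num at this
  · exact fin1 _ _ ⟨⟨1, 1⟩, 0, by ext <;> simp [pow_two]⟩
  · exact fin1 _ _ ⟨⟨-1, 1⟩, 1, by ext <;> simp [pow_two]⟩
  · have := ex7 4 (-1) (-3) ⟨-2, 1⟩ (by norm_num) (by ext <;> simp) (h7 (-3) (by norm_num))
    norm_num at this
  · exact fin1 _ _ ⟨2, 0, by ext <;> simp [pow_two]⟩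
  · have := ex7 4 1 3 ⟨2, 1⟩ (by norm_num) (by ext <;> simp) (h7 3 (by norm_num))
    norm_num at this
  · exact fin1 _ _ ⟨⟨1, 1⟩, 1, by ext <;> simp [pow_two]⟩
  · have := ex7 5 (-3) (-3) ⟨-3, 2⟩ (by norm_num) (by ext <;> simp) (h7 (-3) (by norm_num))
    norm_num at this
  · exact fin1 _ _ ⟨⟨-1, 1⟩, rt, by ext <;> simp [pow_two]⟩
  · have := ex23 5 (-1) 5 1 (by ext <;> simp) (h23 5 (by norm_num))
    norm_num at this
  · exact fin1 _ _ ⟨2, 1, by ext <;> simp [pow_two]⟩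
  · have := ex23 5 1 (-5) (-1) (by ext <;> simp) (h23 (-5) (by norm_num))
    norm_num at this
  · exact fin1 _ _ ⟨⟨1, 1⟩, rt, by ext <;> simp [pow_two]⟩
  · have := ex7 5 3 3 ⟨3, 2⟩ (by norm_num) (by ext <;> simp) (h7 3 (by norm_num))
    norm_num at this

theorem three_dvd_of_norm {x : R} (h : 3 ∣ x.norm) : (3 : R) ∣ x := by
  rw [norm_eq] at h
  have h1 : ((x.re ^ 2 - 2 * x.im ^ 2 : ℤ) : ZMod 3) = 0 :=
    (ZMod.intCast_zmod_eq_zero_iff_dvd _ 3).2 (by exact_mod_cast h)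
  push_cast at h1
  have key : ∀ a b : ZMod 3, a ^ 2 - 2 * b ^ 2 = 0 → a = 0 ∧ b = 0 := by decide
  obtain ⟨ha, hb⟩ := key _ _ h1
  rw [ZMod.intCast_zmod_eq_zero_iff_dvd] at ha hb
  obtain ⟨k, hk⟩ := ha
  obtain ⟨l, hl⟩ := hb
  exact ⟨⟨k, l⟩, by ext <;> simp [hk, hl]⟩

/-- A binary form whose determinant has norm `2` modulo `3` does not represent `3`: its values
divisible by `3` are divisible by `9`. -/
theorem three_excluded {a b c M y z : R} (hM : a * c - b ^ 2 = M) (hN : M.norm % 3 = 2) :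
    a * y ^ 2 + 2 * b * y * z + c * z ^ 2 ≠ 3 := by
  intro hk
  have key : ∀ X Y w : R, X ^ 2 + M * Y ^ 2 = 3 * w → (3 : R) ∣ Y := by
    intro X Y w h
    have h1 : X ^ 2 = 3 * w - M * Y ^ 2 := by linear_combination h
    have h2 := congrArg Zsqrtd.norm h1
    apply three_dvd_of_norm
    have h3 : 3 ∣ (3 * w - M * Y ^ 2).norm - (M * Y ^ 2).norm := by
      simp only [norm_eq]
      generalize M * Y ^ 2 = V
      simp
      exact ⟨3 * (w.re ^ 2 - 2 * w.im ^ 2) - 2 * w.re * V.re + 4 * w.im * V.im, by ring⟩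
    rw [← h2, Zsqrtd.norm_mul, pow_two, pow_two, Zsqrtd.norm_mul, Zsqrtd.norm_mul] at h3
    have h4 := (ZMod.intCast_zmod_eq_zero_iff_dvd _ 3).2 h3
    have hN' : (M.norm : ZMod 3) = 2 := by
      have : ((M.norm : ℤ) : ZMod 3) = ((2 : ℤ) : ZMod 3) := by
        rw [ZMod.intCast_eq_intCast_iff]; exact hN
      simpa using this
    push_cast at h4
    rw [hN'] at h4
    have dec : ∀ a b : ZMod 3, a * a - 2 * (b * b) = 0 → b = 0 := by decide
    have := dec _ _ h4
    exact_mod_cast (ZMod.intCast_zmod_eq_zero_iff_dvd _ 3).1 this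
  obtain ⟨z', rfl⟩ := key (a * y + b * z) z a (by rw [← hM]; linear_combination a * hk)
  obtain ⟨y', rfl⟩ := key (b * y + c * (3 * z')) y c (by rw [← hM]; linear_combination c * hk)
  have : (3 : R) * (a * y' ^ 2 + 2 * b * y' * z' + c * z' ^ 2) = 1 := by
    have h3 : (3 : R) ≠ 0 := by intro h; simpa using congrArg Zsqrtd.re h
    apply mul_left_cancel₀ h3
    linear_combination hk
  have := congrArg Zsqrtd.re this
  simp at this
  omega

/-- The totally positive values `k` with `k.re ≤ 4` of a binary form whose determinant has norm `2`
modulo `3` are all of the shape `s² + (2 + √2) t²`, the only other candidate being `3`. -/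
theorem value_class_m {a b c M y z : R} (hM : a * c - b ^ 2 = M) (hN : M.norm % 3 = 2)
    {k : R} (hk : k = a * y ^ 2 + 2 * b * y * z + c * z ^ 2)
    (hTP : TP k) (hre : k.re ≤ 4) : ∃ s t : R, k = s ^ 2 + ⟨2, 1⟩ * t ^ 2 := by
  rw [TP_iff, norm_eq] at hTP
  have h3 : k ≠ 3 := by rw [hk]; exact three_excluded hM hN
  clear hk
  obtain ⟨r, i⟩ := k
  simp only at hTP hre
  obtain ⟨h0, hn⟩ := hTP
  have hi1 : i ≤ 2 := by nlinarith
  have hi2 : -2 ≤ i := by nlinarith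
  interval_cases r <;> interval_cases i <;> first | (exfalso; norm_num at hn; done) | skip
  · exact ⟨1, 0, by ext <;> simp⟩
  · exact ⟨0, ⟨-1, 1⟩, by ext <;> simp [pow_two]⟩
  · exact ⟨rt, 0, by ext <;> simp⟩
  · exact ⟨0, 1, by ext <;> simp⟩
  · exact ⟨⟨-1, 1⟩, 0, by ext <;> simp [pow_two]⟩
  · exact ⟨1, ⟨-1, 1⟩, by ext <;> simp [pow_two]⟩
  · exact absurd (by ext <;> simp) h3
  · exact ⟨1, 1, by ext <;> simp⟩
  · exact ⟨⟨1, 1⟩, 0, by ext <;> simp [pow_two]⟩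
  · exact ⟨0, rt * ⟨-1, 1⟩, by ext <;> simp [pow_two]⟩
  · exact ⟨rt, ⟨-1, 1⟩, by ext <;> simp [pow_two]⟩
  · exact ⟨2, 0, by ext <;> simp [pow_two]⟩
  · exact ⟨rt, 1, by ext <;> simp [pow_two]⟩
  · exact ⟨0, rt, by ext <;> simp [pow_two]⟩

/-- Let `M = G 0 0`. Completing the square, `M * Q G` is a square plus a binary form of determinant
`M`. If a nonzero value `k` of that binary form is `s² + M t²` up to squares, and `M` is a sum of two
squares up to squares, then `Q G` is equivalent over `ℚ(√2)` to a sum of three squares, so that all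
its values are sums of three squares. -/
theorem threeSq_of_norm {G : Matrix (Fin 3) (Fin 3) R} (hG : PD G) (hdet : G.det = 1)
    {y0 z0 k d s t e f g : R}
    (hk : k = (G 0 0 * G 1 1 - G 0 1 ^ 2) * y0 ^ 2
      + 2 * (G 0 0 * G 1 2 - G 0 1 * G 0 2) * y0 * z0 + (G 0 0 * G 2 2 - G 0 2 ^ 2) * z0 ^ 2)
    (hk0 : k ≠ 0) (hd : d ≠ 0) (hst : d ^ 2 * k = s ^ 2 + G 0 0 * t ^ 2) (he : e ≠ 0)
    (hfg : e ^ 2 * G 0 0 = f ^ 2 + g ^ 2) (u : Fin 3 → R) : ThreeSq (Q G u) := by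
  have hM0 : G 0 0 ≠ 0 := hG.A.ne_zero
  rw [det_three hG.symm] at hdet
  rw [Q_three hG.symm]
  generalize G 0 0 = M at *
  generalize G 1 1 = B at *
  generalize G 2 2 = C at *
  generalize G 0 1 = F at *
  generalize G 0 2 = E at *
  generalize G 1 2 = D at *
  generalize u 0 = x at *
  generalize u 1 = y at *
  generalize u 2 = z at *
  set a := M * B - F ^ 2 with ha
  set b := M * D - F * E with hb
  set c := M * C - E ^ 2 with hc
  have habc : a * c - b ^ 2 = M := by
    rw [ha, hb, hc]; linear_combination M * hdet
  set L := M * x + F * y + E * z with hL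
  set X := a * y0 * y + b * (y0 * z + y * z0) + c * z0 * z with hX
  set Y := y0 * z - z0 * y with hY
  set V := a * y ^ 2 + 2 * b * y * z + c * z ^ 2 with hV
  set q := M * x ^ 2 + B * y ^ 2 + C * z ^ 2 + 2 * D * y * z + 2 * E * x * z + 2 * F * x * y with hq
  have h1 : M * q = L ^ 2 + V := by rw [hq, hL, hV, ha, hb, hc]; ring
  have h2 : k * V = X ^ 2 + M * Y ^ 2 := by
    rw [hk, hX, hY, ← habc, hV]; ring
  have h3 : (d * k) ^ 2 * V = (s * X + M * t * Y) ^ 2 + M * (s * Y - t * X) ^ 2 := by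
    linear_combination d ^ 2 * k * h2 + (X ^ 2 + M * Y ^ 2) * hst
  set P := s * X + M * t * Y
  set W := s * Y - t * X
  have h4 : (d * k) ^ 2 * (M * q) = (d * k * L) ^ 2 + P ^ 2 + M * W ^ 2 := by
    linear_combination (d * k) ^ 2 * h1 + h3
  refine ⟨d * k * M * e, f * (d * k * L) + g * P, f * P - g * (d * k * L), M * e * W, ?_, ?_⟩
  · exact mul_ne_zero (mul_ne_zero (mul_ne_zero hd hk0) hM0) he
  · linear_combination M * e ^ 2 * h4 + ((d * k * L) ^ 2 + P ^ 2) * hfg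

theorem norm_sq_mul (g M : R) : (g ^ 2 * M).norm = g.norm ^ 2 * M.norm := by
  rw [Zsqrtd.norm_mul, pow_two, Zsqrtd.norm_mul, ← pow_two]

/-- A totally positive definite unimodular ternary form over `ℤ[√2]` only represents sums of three
squares of `ℚ(√2)`. On an even sublattice the form takes a value `2q` with
`q ∈ {1, 2, 2 + √2, 2 - √2}`; this value determines, up to squares, the first coefficient `M` of an
equivalent form `H`, and `threeSq_of_norm` applies to `H` and a small value of the complementary
binary form. -/
theorem threeSq_of_unimodular {G : Matrix (Fin 3) (Fin 3) R} (hG : PD G) (hdet : G.det = 1)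
    (u : Fin 3 → R) : ThreeSq (Q G u) := by
  obtain ⟨P, hP, hev⟩ := exists_even_sublattice hG.symm
  have hP0 : P.det ≠ 0 := by
    intro h; rw [h] at hP
    have := congrArg Zsqrtd.re hP
    simp at this
  obtain ⟨w, hw0, hw⟩ := exists_small3 (hG.conj hP0) (by
    have : (Pᵀ * G * P).det = 4 := by
      rw [det_mul, det_mul, hdet, det_transpose, ← hP]; ring
    rw [this, norm_eq]; simp)
  obtain ⟨q, hq⟩ := hev w
  have hTPq : TP q := TP_two.of_mul (hq ▸ (hG.conj hP0).pos w hw0)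
  have hv0 := mulVec_ne_zero hP0 hw0
  rw [Q_conj] at hq
  rw [Q_conj, hq] at hw
  simp at hw
  obtain ⟨g, U, hg, hU, hUv⟩ := exists_primitive _ hv0
  set H := Uᵀ * G * U with hH
  have hU0 : U.det ≠ 0 := by rw [hU]; exact one_ne_zero
  have hPD : PD H := hG.conj hU0
  have hHdet : H.det = 1 := by rw [hH, det_mul, det_mul, hdet, det_transpose, hU]; ring
  have hgM : H 0 0 * g ^ 2 = 2 * q := by
    rw [← hq, hUv, ← Q_conj, ← hH, Q_three hPD.symm]; simp
  -- it suffices to treat the equivalent form `H`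
  suffices hs : ∀ u', ThreeSq (Q H u') by
    have := hs (U⁻¹ *ᵥ u)
    rw [hH, Q_conj, mulVec_mulVec, Matrix.mul_nonsing_inv _ (by rw [hU]; exact isUnit_one),
      one_mulVec] at this
    exact this
  set M := H 0 0 with hMdef
  have hTM : TP M := hPD.A
  have hMn := ((TP_iff M).1 hTM).2
  have hgn : 1 ≤ g.norm ^ 2 := by
    have : g.norm ≠ 0 := fun h => hg (norm_eq_zero.1 h)
    have : 0 < g.norm ^ 2 := by positivity
    omega
  have hnn : g.norm ^ 2 * M.norm = 4 * q.norm := by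
    rw [← norm_sq_mul, mul_comm, hgM, Zsqrtd.norm_mul]
    congr 1
  set a := H 0 0 * H 1 1 - H 0 1 ^ 2 with ha
  set b := H 0 0 * H 1 2 - H 0 1 * H 0 2 with hb
  set c := H 0 0 * H 2 2 - H 0 2 ^ 2 with hc
  have hTa : TP a := hPD.δ
  have habc : a * c - b ^ 2 = M := by
    have h := hHdet
    rw [det_three hPD.symm] at h
    rw [ha, hb, hc]; linear_combination M * h
  have hbin : ∀ y z : R, (y ≠ 0 ∨ z ≠ 0) → TP (a * y ^ 2 + 2 * b * y * z + c * z ^ 2) := by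
    intro y z hyz
    have := hPD.pos ![-(H 0 1 * y + H 0 2 * z), M * y, M * z] (by
      intro h0
      have h1 : M * y = 0 := congrFun h0 1
      have h2 : M * z = 0 := congrFun h0 2
      have := hTM.ne_zero
      simp [this] at h1 h2
      tauto)
    refine hTM.of_mul ?_
    convert this using 1
    rw [Q_three hPD.symm, ha, hb, hc]
    simp
    ring
  intro u'
  have hqcases : q = 1 ∨ q = 2 ∨ q = ⟨2, 1⟩ ∨ q = ⟨2, -1⟩ := by
    rw [TP_iff, norm_eq] at hTPq
    obtain ⟨h1, h2⟩ := hTPq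
    obtain ⟨r, i⟩ := q
    simp only at h1 h2 hw
    have hr : r ≤ 2 := by omega
    have hi1 : i ≤ 1 := by nlinarith
    have hi2 : -1 ≤ i := by nlinarith
    interval_cases r <;> interval_cases i <;> simp at h2 <;> simp [Zsqrtd.ext_iff]
  have class1 : (∃ h : R, M * g ^ 2 = h ^ 2 ∧ (h ^ 2 = 2 ∨ h ^ 2 = 4)) → ThreeSq (Q H u') := by
    rintro ⟨h, h1, h2⟩
    have hh0 : h ≠ 0 := by
      rintro rfl
      have := hTM.ne_zero
      simp [hg, this] at h1
    have hN : M.norm ≤ 16 := by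
      have : (M * g ^ 2).norm ≤ 16 := by
        rw [h1]; rcases h2 with h2 | h2 <;> rw [h2, norm_eq] <;> simp
      rw [mul_comm, norm_sq_mul] at this
      nlinarith
    obtain ⟨y0, z0, hyz, hlt⟩ := exists_small2 hTa (habc ▸ hTM : TP (a * c - b ^ 2)) (ρ := 12)
      (by norm_num) (by
        rw [habc]
        have : (M.norm : ℝ) ≤ 16 := by exact_mod_cast hN
        norm_num; linarith)
    set k := a * y0 ^ 2 + 2 * b * y0 * z0 + c * z0 ^ 2 with hk
    have hkTP : TP k := hbin _ _ hyz
    have hre : k.re ≤ 5 := by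
      have : 2 * k.re < 12 := by exact_mod_cast hlt
      omega
    obtain ⟨d, s, t, hd, hst⟩ := value_class_one habc h1 h2 hk hkTP hre
    refine threeSq_of_norm hPD hHdet (d := d * h) (s := s * h) (t := t * g) (e := g) (f := h)
      (g := 0) hk hkTP.ne_zero (mul_ne_zero hd hh0) ?_ hg ?_ u'
    · linear_combination h ^ 2 * hst - t ^ 2 * h1
    · linear_combination h1
  have classm : (∃ h : R, M * g ^ 2 = ⟨2, 1⟩ * h ^ 2) → q.norm = 2 → ThreeSq (Q H u') := by
    rintro ⟨h, h1⟩ hq2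
    rw [hq2] at hnn
    have hh0 : h ≠ 0 := by
      rintro rfl
      have := hTM.ne_zero
      simp [hg, this] at h1
    have hN : M.norm ≤ 8 := by nlinarith
    have hN3 : M.norm % 3 = 2 := by
      have hgle : g.norm ^ 2 ≤ 8 := by nlinarith
      generalize g.norm = γ at *
      have h1 : γ ≤ 2 := by nlinarith
      have h2 : -2 ≤ γ := by nlinarith
      interval_cases γ <;> omega
    obtain ⟨y0, z0, hyz, hlt⟩ := exists_small2 hTa (habc ▸ hTM : TP (a * c - b ^ 2)) (ρ := 10)
      (by norm_num) (by
        rw [habc]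
        have : (M.norm : ℝ) ≤ 8 := by exact_mod_cast hN
        norm_num; linarith)
    set k := a * y0 ^ 2 + 2 * b * y0 * z0 + c * z0 ^ 2 with hk
    have hkTP : TP k := hbin _ _ hyz
    have hre : k.re ≤ 4 := by
      have : 2 * k.re < 10 := by exact_mod_cast hlt
      omega
    obtain ⟨s, t, hst⟩ := value_class_m habc hN3 hk hkTP hre
    have hm : (⟨2, 1⟩ : R) = 2 + rt := by ext <;> simp
    rw [hm] at h1 hst
    -- `2 (2 + √2) = (1 + √2)² + 1`
    refine threeSq_of_norm hPD hHdet (d := h) (s := s * h) (t := t * g) (e := rt * g)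
      (f := (1 + rt) * h) (g := h) hk hkTP.ne_zero hh0 ?_ (mul_ne_zero rt_ne_zero hg) ?_ u'
    · linear_combination h ^ 2 * hst - t ^ 2 * h1
    · linear_combination 2 * h1 + (g ^ 2 * M - h ^ 2) * rt_sq
  rcases hqcases with rfl | rfl | rfl | rfl
  · exact class1 ⟨rt, by rw [hgM, rt_sq]; ring, Or.inl rt_sq⟩
  · exact class1 ⟨2, by rw [hgM]; ring, Or.inr (by norm_num)⟩
  · exact classm ⟨rt, by rw [hgM, rt_sq]; ring⟩ (by simp [norm_eq])
  · exact classm ⟨rt * ⟨-1, 1⟩, by rw [hgM]; ext <;> simp [pow_two]⟩ (by simp [norm_eq])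
end QO

/-! ### Reduction to ternary forms, and square roots modulo primes -/

namespace QO
open Matrix

theorem TP_diag {a b x y z : R} (ha : TP a) (hb : TP b) (h : ¬ (x = 0 ∧ y = 0 ∧ z = 0)) :
    TP (a * x ^ 2 + b * y ^ 2 + z ^ 2) := by
  by_cases hx : x = 0 <;> by_cases hy : y = 0 <;> by_cases hz : z = 0 <;>
    try simp only [hx, hy, hz, ne_eq, OfNat.ofNat_ne_zero, not_false_eq_true, zero_pow, mul_zero,
      zero_add, add_zero]
  · exact absurd ⟨hx, hy, hz⟩ h
  · exact TP_sq hz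
  · exact hb.mul (TP_sq hy)
  · exact (hb.mul (TP_sq hy)).add (TP_sq hz)
  · exact ha.mul (TP_sq hx)
  · exact (ha.mul (TP_sq hx)).add (TP_sq hz)
  · exact (ha.mul (TP_sq hx)).add (hb.mul (TP_sq hy))
  · exact ((ha.mul (TP_sq hx)).add (hb.mul (TP_sq hy))).add (TP_sq hz)

/-- The analogue of the classical reduction in the three-square theorem: the hypotheses provide a
representation of `n` by a totally positive definite unimodular ternary form. -/
theorem threeSq_of_dvd {n : R} (hn : TP n) {ν : ℕ} (hν : 0 < ν) {b : R}
    (h1 : n ∣ (ν : R) + 1) (h2 : (ν : R) ∣ b ^ 2 + n) : ThreeSq n := by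
  obtain ⟨μ, hμ⟩ := h1
  obtain ⟨k, hk⟩ := h2
  have hνTP : TP (ν : R) := TP_natCast hν
  have hμTP : TP μ := hn.of_mul (by rw [← hμ]; exact hνTP.add TP_one)
  set c := k * μ - 1 with hc
  have hcν : ν * c = μ * b ^ 2 + 1 := by
    rw [hc]; linear_combination (-μ) * hk - hμ
  have hcTP : TP c := by
    refine hνTP.of_mul ?_
    rw [hcν]
    have := TP_diag (x := b) (y := 0) (z := 1) hμTP hμTP (by simp)
    simpa using this
  set G : Matrix (Fin 3) (Fin 3) R := !![μ, 0, -1; 0, c, b; -1, b, n] with hG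
  have hsymm : Gᵀ = G := by
    refine Matrix.ext fun i j => ?_
    fin_cases i <;> fin_cases j <;> rfl
  have hPD : PD G := by
    refine ⟨hsymm, fun u hu => ?_⟩
    refine (hcTP.mul hμTP).of_mul ?_
    have : c * μ * Q G u = c * (μ * u 0 - u 2) ^ 2 + μ * (c * u 1 + b * u 2) ^ 2 + u 2 ^ 2 := by
      rw [Q_three hsymm]
      simp [hG]
      linear_combination (-(u 2) ^ 2 * c) * hμ + (u 2) ^ 2 * hcν
    rw [this]
    refine TP_diag hcTP hμTP ?_
    rintro ⟨e1, e2, e3⟩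
    rw [e3] at e1 e2
    apply hu
    ext i : 1
    fin_cases i
    · simpa [hμTP.ne_zero] using e1
    · simpa [hcTP.ne_zero] using e2
    · exact e3
  have hdet : G.det = 1 := by
    rw [det_fin_three]; simp [hG]
    linear_combination (-c) * hμ + hcν
  have := threeSq_of_unimodular hPD hdet ![0, 0, 1]
  have e : Q G ![0, 0, 1] = n := by
    rw [Q_three hsymm]; simp [hG]
  rwa [e] at this

section zmodp
variable {p : ℕ} [Fact p.Prime]

theorem isSquare_or_of_mul_not {u v : ZMod p} (h : ¬ IsSquare (u * v)) : IsSquare u ∨ IsSquare v := by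
  by_contra! hc
  apply h
  have h1 := quadraticChar_neg_one_iff_not_isSquare.2 hc.1
  have h2 := quadraticChar_neg_one_iff_not_isSquare.2 hc.2
  by_contra h3
  have h3 := quadraticChar_neg_one_iff_not_isSquare.2 h3
  rw [map_mul, h1, h2] at h3
  norm_num at h3

/-- In `𝔽_p[√2]`, with `2` a nonsquare, an element of square norm is a square. -/
theorem zmod_sqrt (h2 : ¬ IsSquare (2 : ZMod p)) {x1 x2 k : ZMod p}
    (h : x1 ^ 2 - 2 * x2 ^ 2 = k ^ 2) : ∃ b1 b2 : ZMod p, b1 ^ 2 + 2 * b2 ^ 2 = x1 ∧ 2 * b1 * b2 = x2 := by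
  have h20 : (2 : ZMod p) ≠ 0 := by rintro h; rw [h] at h2; exact h2 ⟨0, by simp⟩
  by_cases hx2 : x2 = 0
  · subst hx2
    by_cases hx1 : IsSquare x1
    · obtain ⟨r, rfl⟩ := hx1
      exact ⟨r, 0, by ring, by ring⟩
    · have : IsSquare (x1 / 2) := by
        have hns : ¬ IsSquare (x1 * (x1 / 2)) := by
          intro ⟨r, hr⟩
          by_cases hx0 : x1 = 0
          · exact hx1 ⟨0, by simp [hx0]⟩
          have hr0 : r ≠ 0 := by
            rintro rfl
            apply hx0
            simpa [h20] using hr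
          apply h2
          refine ⟨x1 / r, ?_⟩
          field_simp at hr ⊢
          linear_combination -hr
        exact (isSquare_or_of_mul_not hns).resolve_left hx1
      obtain ⟨r, hr⟩ := this
      exact ⟨0, r, by field_simp at hr; linear_combination -hr, by ring⟩
  · have key : ∀ k : ZMod p, x1 ^ 2 - 2 * x2 ^ 2 = k ^ 2 → IsSquare ((x1 + k) / 2) →
        ∃ b1 b2 : ZMod p, b1 ^ 2 + 2 * b2 ^ 2 = x1 ∧ 2 * b1 * b2 = x2 := by
      rintro k h ⟨r, hr⟩
      have hr0 : r ≠ 0 := by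
        rintro rfl
        have : x1 = -k := by field_simp at hr; linear_combination hr
        rw [this] at h
        have : 2 * x2 ^ 2 = 0 := by linear_combination -h
        simp [h20, hx2] at this
      refine ⟨r, x2 / (2 * r), ?_, by field_simp⟩
      field_simp at hr ⊢
      have hx : x1 = r ^ 2 * 2 - k := by linear_combination hr
      subst hx
      apply mul_left_cancel₀ h20
      linear_combination -h
    have : ¬ IsSquare (((x1 + k) / 2) * ((x1 + -k) / 2)) := by
      rintro ⟨r, hr⟩
      have e : ((x1 + k) / 2) * ((x1 + -k) / 2) = x2 ^ 2 / 2 := by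
        field_simp
        linear_combination h
      rw [e] at hr
      have hr0 : r ≠ 0 := by
        rintro rfl
        field_simp at hr
        simp [hx2] at hr
      apply h2
      refine ⟨x2 / r, ?_⟩
      field_simp at hr ⊢
      linear_combination -hr
    rcases isSquare_or_of_mul_not this with h' | h'
    · exact key k h h'
    · exact key (-k) (by linear_combination h) h'

theorem natCast_dvd_iff (m : ℕ) (x : R) : (m : R) ∣ x ↔ (m : ℤ) ∣ x.re ∧ (m : ℤ) ∣ x.im := by
  rw [← Zsqrtd.intCast_dvd]; simp

/-- At a prime inert in `ℤ[√2]`, an element with square norm is a square. -/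
theorem sqrt_inert (h2 : ¬ IsSquare (2 : ZMod p)) {x : R} (h : IsSquare ((x.norm : ℤ) : ZMod p)) :
    ∃ b : R, (p : R) ∣ b ^ 2 - x := by
  obtain ⟨k, hk⟩ := h
  rw [norm_eq] at hk
  push_cast at hk
  obtain ⟨b1, b2, e1, e2⟩ := zmod_sqrt h2 (hk.trans (pow_two k).symm)
  obtain ⟨c1, rfl⟩ := ZMod.intCast_surjective b1
  obtain ⟨c2, rfl⟩ := ZMod.intCast_surjective b2
  refine ⟨⟨c1, c2⟩, ?_⟩
  rw [natCast_dvd_iff, ← ZMod.intCast_zmod_eq_zero_iff_dvd, ← ZMod.intCast_zmod_eq_zero_iff_dvd]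
  constructor
  · simp [pow_two]; linear_combination e1
  · simp [pow_two]; linear_combination e2

end zmodp
end QO

/-! ### Sums of three squares in `ℚ(√2)` -/

namespace QO

theorem exists_prime {m1 m2 : ℕ} [NeZero m1] [NeZero m2] (h : m1.Coprime m2) {c1 : ZMod m1}
    {c2 : ZMod m2} (h1 : IsUnit c1) (h2 : IsUnit c2) (n : ℕ) :
    ∃ p > n, p.Prime ∧ (p : ZMod m1) = c1 ∧ (p : ZMod m2) = c2 := by
  have : NeZero (m1 * m2) := ⟨mul_ne_zero (NeZero.ne _) (NeZero.ne _)⟩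
  have hu : IsUnit ((ZMod.chineseRemainder h).symm (c1, c2)) := by
    rw [MulEquiv.isUnit_map]
    exact Prod.isUnit_iff.2 ⟨h1, h2⟩
  obtain ⟨p, hp, hpp, he⟩ := Nat.forall_exists_prime_gt_and_eq_mod hu n
  have he2 := congrArg (ZMod.chineseRemainder h) he
  rw [RingEquiv.apply_symm_apply, map_natCast] at he2
  exact ⟨p, hp, hpp, congrArg Prod.fst he2, congrArg Prod.snd he2⟩

theorem mod_of_zmod {p m a : ℕ} (h : (p : ZMod m) = (a : ZMod m)) : p % m = a % m :=
  (ZMod.natCast_eq_natCast_iff' p a m).1 h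

theorem jacobi_congr {p N : ℕ} {c : ℤ} (h : (p : ZMod N) = (c : ZMod N)) :
    jacobiSym p N = jacobiSym c N :=
  jacobiSym.mod_left' ((ZMod.intCast_eq_intCast_iff _ _ _).1 (by exact_mod_cast h))

theorem dvd_of_zmod_neg_one {p N : ℕ} (h : (p : ZMod N) = -1) : N ∣ p + 1 := by
  rw [← ZMod.natCast_eq_zero_iff]; push_cast; rw [h]; ring

/-- An element of `ℤ[√2]` divides `ν + 1` as soon as its norm does. -/
theorem dvd_of_norm_dvd {n : R} {N ν : ℕ} (hN : n.norm = N) (h : N ∣ ν + 1) :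
    n ∣ (ν : R) + 1 := by
  have h1 : n ∣ (N : R) := ⟨star n, by rw [← Zsqrtd.norm_eq_mul_conj, hN]; simp⟩
  have h2 : (N : R) ∣ ((ν + 1 : ℕ) : R) := Nat.cast_dvd_cast h
  simpa using h1.trans h2

theorem not_isSquare_two {p : ℕ} [Fact p.Prime] (h : p % 8 = 3 ∨ p % 8 = 5) :
    ¬ IsSquare (2 : ZMod p) := by
  rw [ZMod.exists_sq_eq_two_iff (by rintro rfl; omega)]
  omega

theorem exists_sqrt_neg {p : ℕ} [Fact p.Prime] (h : p % 8 = 3 ∨ p % 8 = 5) {n : R}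
    (hJ : jacobiSym n.norm p = 1) : ∃ b : R, (p : R) ∣ b ^ 2 + n := by
  have := sqrt_inert (not_isSquare_two h) (x := -n)
    (by rw [Zsqrtd.norm_neg]; exact ZMod.isSquare_of_jacobiSym_eq_one hJ)
  simpa using this

theorem coprime_pow_two {k N : ℕ} (h : Odd N) : (2 ^ k).Coprime N :=
  Nat.Coprime.pow_left _ (Nat.coprime_two_left.2 h)

/-- The case of odd norm `N`: take for `ν` a prime `p ≡ 3 mod 8` with `p ≡ -1 mod N`. Such a prime is
inert in `ℤ[√2]`, and by reciprocity `N` is a square modulo `p`, so `-n` is one too. -/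
theorem threeSq_odd {n : R} (hn : TP n) (hodd : Odd n.norm) : ThreeSq n := by
  have hpos := ((TP_iff n).1 hn).2
  obtain ⟨N, hN⟩ := Int.eq_ofNat_of_zero_le hpos.le
  have hNodd : Odd N := by rw [hN] at hodd; exact_mod_cast hodd
  have : NeZero N := ⟨by rintro rfl; simp at hN; omega⟩
  obtain ⟨p, hp0, hp, h8, hpN⟩ := exists_prime (m1 := 8) (m2 := N) (c1 := 3) (c2 := -1)
    (coprime_pow_two (k := 3) hNodd) (by decide) isUnit_one.neg 2
  have := Fact.mk hp
  have h8' : p % 8 = 3 := mod_of_zmod (a := 3) (by exact_mod_cast h8)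
  have hJ0 : jacobiSym p N = ZMod.χ₄ N := by
    rw [jacobi_congr (c := -1) (by rw [hpN]; simp), jacobiSym.at_neg_one hNodd]
  have hJ : jacobiSym n.norm p = 1 := by
    rw [hN]
    have : N % 4 = 1 ∨ N % 4 = 3 := by have := Nat.odd_iff.1 hNodd; omega
    rcases this with h | h
    · rw [jacobiSym.quadratic_reciprocity_one_mod_four h (Nat.odd_iff.2 (by omega)), hJ0,
        ZMod.χ₄_nat_one_mod_four h]
    · rw [jacobiSym.quadratic_reciprocity_three_mod_four h (by omega), hJ0,
        ZMod.χ₄_nat_three_mod_four h]; norm_num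
  obtain ⟨b, hb⟩ := exists_sqrt_neg (Or.inl h8') hJ
  exact threeSq_of_dvd hn hp.pos (dvd_of_norm_dvd hN (dvd_of_zmod_neg_one hpN)) hb

theorem two_mul_dvd {p N : ℕ} (hN : Odd N) (hp : Odd p) (h : N ∣ p + 1) : 2 * N ∣ p + 1 :=
  Nat.Coprime.mul_dvd_of_dvd_of_dvd (Nat.coprime_two_left.2 hN) hp.add_one.two_dvd h

theorem jacobi_two_mul {p N : ℕ} (h : p % 8 = 3 ∨ p % 8 = 5) (hJ : jacobiSym N p = -1) :
    jacobiSym ((2 * N : ℕ) : ℤ) p = 1 := by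
  push_cast
  rw [jacobiSym.mul_left, hJ, jacobiSym.at_two (Nat.odd_iff.2 (by omega)),
    ZMod.χ₈_nat_eq_if_mod_eight]
  rw [if_neg (by omega), if_neg (by omega)]; norm_num

/-- The case of norm `2 N` with `N ≡ 7 mod 8`: take for `ν` a prime `p ≡ 5 mod 8` with
`p ≡ -1 mod N`. -/
theorem threeSq_seven {n : R} (hn : TP n) {N : ℕ} (hN : n.norm = (2 * N : ℕ)) (h7 : N % 8 = 7) :
    ThreeSq n := by
  have hNodd : Odd N := Nat.odd_iff.2 (by omega)
  have : NeZero N := ⟨by omega⟩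
  obtain ⟨p, hp0, hp, h8, hpN⟩ := exists_prime (m1 := 8) (m2 := N) (c1 := 5) (c2 := -1)
    (coprime_pow_two (k := 3) hNodd) (by decide) isUnit_one.neg 2
  have := Fact.mk hp
  have h8' : p % 8 = 5 := mod_of_zmod (a := 5) (by exact_mod_cast h8)
  have hJ : jacobiSym N p = -1 := by
    rw [jacobiSym.quadratic_reciprocity_one_mod_four' hNodd (by omega),
      jacobi_congr (c := -1) (by rw [hpN]; simp), jacobiSym.at_neg_one hNodd,
      ZMod.χ₄_nat_three_mod_four (by omega)]
  obtain ⟨b, hb⟩ := exists_sqrt_neg (Or.inr h8') (n := n)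
    (by rw [hN]; exact jacobi_two_mul (Or.inr h8') hJ)
  exact threeSq_of_dvd hn hp.pos (dvd_of_norm_dvd hN
    (two_mul_dvd hNodd (Nat.odd_iff.2 (by omega)) (dvd_of_zmod_neg_one hpN))) hb

/-- A nonsquare odd `N` has primes `p ≡ 3 mod 8` with `(p / N) = -1`. -/
theorem exists_prime_jacobi {N : ℕ} (hNodd : Odd N) (hns : ¬ IsSquare N) :
    ∃ p > N, p.Prime ∧ p % 8 = 3 ∧ jacobiSym p N = -1 := by
  obtain ⟨a, b, hab, hsq⟩ := Nat.sq_mul_squarefree N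
  have ha1 : a ≠ 1 := by rintro rfl; exact hns ⟨b, by rw [← hab]; ring⟩
  have haodd : Odd a := (Nat.odd_mul.1 (hab ▸ hNodd)).2
  obtain ⟨q, hq, a', rfl⟩ := Nat.exists_prime_and_dvd ha1
  have := Fact.mk hq
  have ha'0 : a' ≠ 0 := by rintro rfl; simp at haodd
  have hb0 : b ≠ 0 := by rintro rfl; rw [← hab] at hNodd; simp at hNodd
  have : NeZero a' := ⟨ha'0⟩
  have : NeZero b := ⟨hb0⟩
  have : NeZero q := ⟨hq.ne_zero⟩
  have : NeZero (q * a') := ⟨mul_ne_zero hq.ne_zero ha'0⟩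
  have hcop : q.Coprime a' := Nat.coprime_of_squarefree_mul hsq
  have hq2 : q ≠ 2 := by rintro rfl; have := (Nat.odd_mul.1 haodd).1; revert this; decide
  obtain ⟨g, hg⟩ := FiniteField.exists_nonsquare (F := ZMod q) (by rwa [ZMod.ringChar_zmod_n])
  have hg0 : g ≠ 0 := by rintro rfl; exact hg ⟨0, by simp⟩
  have hu : IsUnit ((ZMod.chineseRemainder hcop).symm (g, 1)) := by
    rw [MulEquiv.isUnit_map]
    exact Prod.isUnit_iff.2 ⟨isUnit_iff_ne_zero.2 hg0, isUnit_one⟩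
  obtain ⟨p, hpN, hp, h8, hpc⟩ := exists_prime (m1 := 8) (m2 := q * a') (c1 := 3)
    (coprime_pow_two (k := 3) haodd) (by decide) hu N
  refine ⟨p, hpN, hp, mod_of_zmod (a := 3) (by exact_mod_cast h8), ?_⟩
  have he2 := congrArg (ZMod.chineseRemainder hcop) hpc
  rw [RingEquiv.apply_symm_apply, map_natCast] at he2
  have e1 : (p : ZMod q) = g := congrArg Prod.fst he2
  have e2 : (p : ZMod a') = 1 := congrArg Prod.snd he2
  have hbN : b ∣ N := ⟨b * (q * a'), by rw [← hab]; ring⟩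
  have hpb : (p : ℤ).gcd b = 1 := by
    rw [Int.gcd_natCast_natCast]
    refine (Nat.Prime.coprime_iff_not_dvd hp).2 fun h => ?_
    have := Nat.le_of_dvd hNodd.pos (h.trans hbN)
    omega
  have hJq : jacobiSym p q = -1 := by
    rw [ZMod.nonsquare_iff_jacobiSym_eq_neg_one]
    push_cast; rwa [e1]
  have hJa : jacobiSym p a' = 1 := by
    rw [jacobi_congr (c := 1) (by rw [e2]; simp), jacobiSym.one_left]
  have hb2 : NeZero (b ^ 2) := ⟨pow_ne_zero _ hb0⟩
  rw [← hab, jacobiSym.mul_right, jacobiSym.mul_right, jacobiSym.pow_right, jacobiSym.sq_one hpb,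
    hJq, hJa]
  norm_num

/-- The case of norm `2 N` with `N ≡ 1 mod 8` not a square: take for `ν` a product of two primes
`p, r ≡ 3 mod 8` with `p r ≡ -1 mod N` and `(p / N) = -1`. -/
theorem threeSq_one {n : R} (hn : TP n) {N : ℕ} (hN : n.norm = (2 * N : ℕ)) (h1 : N % 8 = 1)
    (hns : ¬ IsSquare N) : ThreeSq n := by
  have hNodd : Odd N := Nat.odd_iff.2 (by omega)
  have : NeZero N := ⟨by omega⟩
  obtain ⟨p, hpN, hp, hp8, hpJ⟩ := exists_prime_jacobi hNodd hns
  have hcop : p.Coprime N := (Nat.Prime.coprime_iff_not_dvd hp).2 fun h => by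
    have := Nat.le_of_dvd hNodd.pos h
    omega
  have hpu : IsUnit (p : ZMod N) := (ZMod.isUnit_iff_coprime _ _).2 hcop
  obtain ⟨u, hu⟩ := hpu
  obtain ⟨r, hrp, hr, hr8, hrN⟩ := exists_prime (m1 := 8) (m2 := N) (c1 := 3)
    (c2 := -(↑(u⁻¹) : ZMod N)) (coprime_pow_two (k := 3) hNodd) (by decide) (u⁻¹).isUnit.neg p
  have hr8' : r % 8 = 3 := mod_of_zmod (a := 3) (by exact_mod_cast hr8)
  have hprN : ((p * r : ℕ) : ZMod N) = -1 := by
    push_cast; rw [hrN, ← hu]; simp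
  have hJpr : jacobiSym p N * jacobiSym r N = 1 := by
    rw [← jacobiSym.mul_left, ← Nat.cast_mul, jacobi_congr (c := -1) (by rw [hprN]; simp),
      jacobiSym.at_neg_one hNodd, ZMod.χ₄_nat_one_mod_four (by omega)]
  have hrJ : jacobiSym r N = -1 := by rw [hpJ] at hJpr; linarith
  have hsq : ∀ q : ℕ, q.Prime → q % 8 = 3 → jacobiSym q N = -1 → ∃ b : R, (q : R) ∣ b ^ 2 + n := by
    intro q hq hq8 hqJ
    have := Fact.mk hq
    refine exists_sqrt_neg (Or.inl hq8) (n := n) ?_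
    rw [hN]
    refine jacobi_two_mul (Or.inl hq8) ?_
    rw [jacobiSym.quadratic_reciprocity_one_mod_four (by omega) (Nat.odd_iff.2 (by omega)), hqJ]
  obtain ⟨b1, k1, hb1⟩ := hsq p hp hp8 hpJ
  obtain ⟨b2, k2, hb2⟩ := hsq r hr hr8' hrJ
  have hpr : p.Coprime r := (Nat.coprime_primes hp hr).2 (by omega)
  have hcopR : IsCoprime (p : R) (r : R) := by
    have := (Nat.isCoprime_iff_coprime.2 hpr).map (Int.castRingHom R)
    simpa using this
  obtain ⟨x, y, hxy⟩ := id hcopR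
  refine threeSq_of_dvd (ν := p * r) (b := b1 * (y * r) + b2 * (x * p)) hn
    (Nat.mul_pos hp.pos hr.pos)
    (dvd_of_norm_dvd hN (two_mul_dvd hNodd ?_ (dvd_of_zmod_neg_one hprN))) ?_
  · exact (Nat.odd_iff.2 (by omega)).mul (Nat.odd_iff.2 (by omega))
  · push_cast
    refine hcopR.mul_dvd ?_ ?_
    · refine ⟨k1 + x * (b2 - b1) * (2 * b1 + (b2 - b1) * (x * p)), ?_⟩
      linear_combination hb1 + b1 * (b1 * (y * r) + b1 * (1 - x * p) + 2 * b2 * (x * p)) * hxy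
    · refine ⟨k2 + y * (b1 - b2) * (2 * b2 + (b1 - b2) * (y * r)), ?_⟩
      linear_combination hb2 + b2 * (b2 * (x * p) + b2 * (1 - y * r) + 2 * b1 * (y * r)) * hxy

theorem ThreeSq.of_sq {n m e f : R} (hm : ThreeSq m) (he : e ≠ 0) (h : e ^ 2 * n = m * f ^ 2) :
    ThreeSq n := by
  obtain ⟨d, x, y, z, hd, hx⟩ := hm
  exact ⟨d * e, x * f, y * f, z * f, mul_ne_zero hd he,
    by linear_combination d ^ 2 * h + f ^ 2 * hx⟩

/-- A square root of `-(2 + √2) r` modulo a prime `p` that splits completely in `ℚ(ζ₈)`. Here `z` is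
a primitive eighth root of unity, `z + z⁻¹` is a square root of `2`, and
`2 ± (z + z⁻¹) = ±(z ± 1)² / z`. -/
theorem sqrt_split {p : ℕ} [Fact p.Prime] (hp : p ≠ 2) {r z : ZMod p} (hz : z ^ 4 = -1)
    (hrz : IsSquare (r * z)) :
    ∃ b1 b2 : ZMod p, b1 ^ 2 + 2 * b2 ^ 2 = -(2 * r) ∧ 2 * b1 * b2 = -r := by
  have h2 : (2 : ZMod p) ≠ 0 := by
    have := ZMod.natCast_eq_zero_iff 2 p
    push_cast at this
    rw [Ne, this, Nat.prime_dvd_prime_iff_eq Fact.out Nat.prime_two]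
    exact hp
  have hz0 : z ≠ 0 := by rintro rfl; simp at hz
  obtain ⟨w, hw⟩ := hrz
  set τ := z + z⁻¹ with hτ
  have hτ2 : τ ^ 2 = 2 := by
    rw [hτ]; field_simp; linear_combination hz
  have hτ0 : τ ≠ 0 := by intro h; rw [h] at hτ2; apply h2; simpa using hτ2.symm
  -- `z ^ 2` is a square root of `-1`
  set B1 := z ^ 2 * w * (z + 1) / z with hB1
  set B2 := w * (z - 1) / z with hB2
  have e1 : B1 ^ 2 = -(r * (2 + τ)) := by
    rw [hB1, hτ]; field_simp
    linear_combination (z + 1) ^ 2 * (-z ^ 3 * hw + r * hz)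
  have e2 : B2 ^ 2 = -(r * (2 - τ)) := by
    rw [hB2, hτ]; field_simp
    linear_combination -(z - 1) ^ 2 * hw
  refine ⟨(B1 + B2) / 2, (B1 - B2) / (2 * τ), ?_, ?_⟩
  · field_simp
    rw [hτ2]
    linear_combination 4 * e1 + 4 * e2
  · field_simp
    linear_combination e1 - e2

theorem exists_z {p : ℕ} [Fact p.Prime] {r : ZMod p}
    (h : p % 16 = 1 ∧ IsSquare r ∨ p % 16 = 9 ∧ ¬ IsSquare r) :
    ∃ z : ZMod p, z ^ 4 = -1 ∧ IsSquare (r * z) := by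
  have hp2 : p ≠ 2 := by rintro rfl; omega
  obtain ⟨g, hg⟩ := FiniteField.exists_nonsquare (F := ZMod p) (by rwa [ZMod.ringChar_zmod_n])
  have hg0 : g ≠ 0 := by rintro rfl; exact hg ⟨0, by simp⟩
  have hgp : g ^ (p / 2) = -1 :=
    (ZMod.pow_div_two_eq_neg_one_or_one p hg0).resolve_left
      fun h => hg ((ZMod.euler_criterion p hg0).2 h)
  rcases h with ⟨hp, s, hs⟩ | ⟨hp, hr⟩
  · refine ⟨(g ^ (p / 16)) ^ 2, ?_, s * g ^ (p / 16), by rw [hs]; ring⟩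
    rw [← hgp, ← pow_mul, ← pow_mul]; congr 1; omega
  · refine ⟨g * (g ^ (p / 16)) ^ 2, ?_, ?_⟩
    · rw [← hgp, mul_pow, ← pow_mul, ← pow_mul, ← pow_add]
      congr 1; omega
    · have : IsSquare (r * g) := by
        have h1 := quadraticChar_neg_one_iff_not_isSquare.2 hr
        have h2 := quadraticChar_neg_one_iff_not_isSquare.2 hg
        by_contra h3
        have h3 := quadraticChar_neg_one_iff_not_isSquare.2 h3
        rw [map_mul, h1, h2] at h3
        norm_num at h3
      rw [← mul_assoc]
      exact this.mul (IsSquare.sq _)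

/-- The elements `(2 + √2) r` with `r` an odd natural number: take for `ν` a prime `p` congruent to
`1` or `9` modulo `16` and to `-1` modulo `r`. -/
theorem threeSq_special {r : ℕ} (hr : Odd r) : ThreeSq ((2 + rt) * r) := by
  have hr0 : 0 < r := hr.pos
  have : NeZero r := ⟨hr0.ne'⟩
  have hTP : TP ((2 + rt) * r : R) := by
    refine TP.mul ?_ (TP_natCast hr0)
    rw [TP_iff]; simp [norm_eq]
  have hmod : r % 4 = 1 ∨ r % 4 = 3 := by have := Nat.odd_iff.1 hr; omega
  obtain ⟨c, hcu, hc⟩ : ∃ c : ℕ, IsUnit (c : ZMod 16) ∧ (c = 1 ∧ r % 4 = 1 ∨ c = 9 ∧ r % 4 = 3) := by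
    rcases hmod with h | h
    · exact ⟨1, by decide, Or.inl ⟨rfl, h⟩⟩
    · exact ⟨9, by decide, Or.inr ⟨rfl, h⟩⟩
  obtain ⟨p, hp0, hp, h16, hpr⟩ := exists_prime (m1 := 16) (m2 := r) (c2 := -1)
    (coprime_pow_two (k := 4) hr) hcu isUnit_one.neg 2
  have := Fact.mk hp
  have hpm : p % 16 = c % 16 := mod_of_zmod h16
  have hJ : jacobiSym r p = ZMod.χ₄ r := by
    rw [jacobiSym.quadratic_reciprocity_one_mod_four' hr (by omega),
      jacobi_congr (c := -1) (by rw [hpr]; simp), jacobiSym.at_neg_one hr]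
  obtain ⟨z, hz, hrz⟩ := exists_z (p := p) (r := r) (by
    rcases hc with ⟨rfl, h⟩ | ⟨rfl, h⟩
    · left
      rw [ZMod.χ₄_nat_one_mod_four h] at hJ
      exact ⟨hpm, by simpa using ZMod.isSquare_of_jacobiSym_eq_one hJ⟩
    · right
      rw [ZMod.χ₄_nat_three_mod_four h] at hJ
      exact ⟨hpm, by simpa using ZMod.nonsquare_iff_jacobiSym_eq_neg_one.1 hJ⟩)
  obtain ⟨b1, b2, e1, e2⟩ := sqrt_split (by omega) hz hrz
  obtain ⟨c1, rfl⟩ := ZMod.intCast_surjective b1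
  obtain ⟨c2, rfl⟩ := ZMod.intCast_surjective b2
  refine threeSq_of_dvd (b := ⟨c1, c2⟩) hTP hp.pos ?_ ?_
  · have h1 : ((2 + rt) * r : R) ∣ ((2 * r : ℕ) : R) :=
      ⟨2 - rt, by push_cast; linear_combination (r : R) * rt_sq⟩
    have h2 : ((2 * r : ℕ) : R) ∣ ((p + 1 : ℕ) : R) :=
      Nat.cast_dvd_cast (two_mul_dvd hr (Nat.odd_iff.2 (by omega)) (dvd_of_zmod_neg_one hpr))
    simpa using h1.trans h2
  · rw [natCast_dvd_iff, ← ZMod.intCast_zmod_eq_zero_iff_dvd, ← ZMod.intCast_zmod_eq_zero_iff_dvd]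
    constructor
    · simp [pow_two]; linear_combination e1
    · simp [pow_two]; linear_combination e2

/-- The case of norm `2 j²`: up to squares such an element is `(2 + √2) r` with `r` an odd natural
number, by Hilbert 90. -/
theorem threeSq_square {n : R} (hn : TP n) {j : ℤ} (hj : 0 < j) (hN : n.norm = 2 * j ^ 2) :
    ThreeSq n := by
  have hm : TP (2 - rt) := by rw [TP_iff]; simp [norm_eq]
  set x := n * (2 - rt) with hx
  have hxTP : TP x := hn.mul hm
  have hxn : x.norm = 4 * j ^ 2 := by
    rw [hx, Zsqrtd.norm_mul, hN]; simp [norm_eq]; ring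
  have hre := ((TP_iff x).1 hxTP).1
  -- `x` satisfies `x² - Tr(x) x + (2j)² = 0`
  have hchar : x ^ 2 - 2 * (x.re : R) * x + (2 * j : R) ^ 2 = 0 := by
    rw [norm_eq] at hxn
    have h2 : x.im ^ 2 * 2 = x.re ^ 2 - 4 * j ^ 2 := by linarith
    ext
    · simp [pow_two]; linarith
    · simp [pow_two]; ring
  obtain ⟨T, hT⟩ := Int.eq_ofNat_of_zero_le (a := 2 * x.re + 4 * j) (by linarith)
  have hT0 : 2 * T ≠ 0 := by rintro h; simp at h; rw [h] at hT; push_cast at hT; linarith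
  have hTR : (T : R) = 2 * x.re + 4 * j := by
    have := congrArg (Int.cast : ℤ → R) hT
    push_cast at this
    exact this.symm
  obtain ⟨e, r, hr, her⟩ := Nat.exists_eq_two_pow_mul_odd hT0
  have herR : (2 * T : R) = (rt ^ e) ^ 2 * r := by
    rw [← pow_mul, mul_comm e, pow_mul, rt_sq]; exact_mod_cast congrArg (Nat.cast : ℕ → R) her
  have hT0R : (2 * T : R) ≠ 0 := by exact_mod_cast hT0
  refine (threeSq_special hr).of_sq (f := rt ^ e * (x + 2 * j)) hT0R ?_
  have h1 : x * T = (x + 2 * j) ^ 2 := by rw [hTR]; linear_combination -hchar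
  have h2 : (2 : R) * n = (2 + rt) * x := by rw [hx]; linear_combination n * rt_sq
  calc (2 * T : R) ^ 2 * n = (2 * T) * T * (2 * n) := by ring
    _ = (2 + rt) * (x * T) * (2 * T) := by rw [h2]; ring
    _ = _ := by rw [h1, herR]; ring

theorem sq_mod_eight {a : ℤ} (h : Odd a) : a ^ 2 % 8 = 1 := by
  have : a % 8 = 1 ∨ a % 8 = 3 ∨ a % 8 = 5 ∨ a % 8 = 7 := by have := Int.odd_iff.1 h; omega
  rcases this with h | h | h | h <;> simp [pow_two, Int.mul_emod, h]

/-- Every totally positive element of `ℤ[√2]` is a sum of three squares in `ℚ(√2)`. -/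
theorem TP.threeSq {n : R} (hn : TP n) : ThreeSq n := by
  induction hk : n.norm.natAbs using Nat.strong_induction_on generalizing n with
  | _ k ih =>
  have hpos := ((TP_iff n).1 hn).2
  have hne := norm_eq n
  rcases Int.even_or_odd n.re with ⟨a, ha⟩ | ho
  swap
  · refine threeSq_odd hn ?_
    rw [hne]
    exact (ho.pow).sub_even (even_two_mul _)
  rcases Int.even_or_odd n.im with ⟨c, hc⟩ | hio
  · obtain ⟨m, rfl⟩ := (two_dvd_iff n).2 ⟨⟨a, by omega⟩, ⟨c, by omega⟩⟩
    have hmTP : TP m := TP_two.of_mul hn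
    refine (ih _ ?_ hmTP rfl).of_sq (e := 1) (f := rt) one_ne_zero (by rw [rt_sq]; ring)
    have hmpos := ((TP_iff m).1 hmTP).2
    rw [Zsqrtd.norm_mul, show (2 : R).norm = 4 from rfl] at hk
    omega
  · have hb : n.im ^ 2 % 8 = 1 := sq_mod_eight hio
    have hNe : n.norm = 2 * (2 * a ^ 2 - n.im ^ 2) := by rw [hne, ha]; ring
    obtain ⟨N, hN⟩ := Int.eq_ofNat_of_zero_le (a := 2 * a ^ 2 - n.im ^ 2) (by linarith)
    have hN2 : n.norm = (2 * N : ℕ) := by rw [hNe, hN]; push_cast; rfl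
    by_cases hsq : IsSquare N
    · obtain ⟨j, rfl⟩ := hsq
      refine threeSq_square hn (j := j) ?_ (by rw [hN2]; push_cast; ring)
      rcases Nat.eq_zero_or_pos j with rfl | h
      · simp at hN2; omega
      · exact_mod_cast h
    rcases Int.even_or_odd a with ⟨a', rfl⟩ | hao
    · refine threeSq_seven hn hN2 ?_
      have : 2 * (a' + a') ^ 2 = 8 * a' ^ 2 := by ring
      omega
    · refine threeSq_one hn hN2 ?_ hsq
      have := sq_mod_eight hao
      omega
end QO

/-! ### Covering radii -/

namespace QO

/-- The squared distances from a real number to `ℤ` and to `ℤ + 1/2` (here to `m / 2` and `n / 2`)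
add up to at most `1/4`, with equality only on `½ℤ`. -/
theorem round_two (u : ℝ) : ∃ m n : ℤ, Even m ∧ Odd n ∧
    (u - m / 2) ^ 2 + (u - n / 2) ^ 2 ≤ 1 / 4 ∧
    ((u - m / 2) ^ 2 + (u - n / 2) ^ 2 = 1 / 4 →
      ∃ k : ℤ, Even k ∧ (u - k / 2 = 0 ∨ u - k / 2 = 1 / 2) ∧ (u - k / 2) ^ 2 = (u - m / 2) ^ 2) := by
  have h := abs_le.1 (abs_sub_round u)
  set r := round u
  rcases le_total 0 (u - r) with h0 | h0
  · refine ⟨2 * r, 2 * r + 1, even_two_mul _, odd_two_mul_add_one _, ?_, fun e => ?_⟩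
    · push_cast; nlinarith
    · push_cast at e
      have : (u - r) * (u - r - 1 / 2) = 0 := by linarith
      refine ⟨2 * r, even_two_mul _, ?_, rfl⟩
      push_cast
      rcases mul_eq_zero.1 this with h | h
      · left; linarith
      · right; linarith
  · refine ⟨2 * r, 2 * r - 1, even_two_mul _, (even_two_mul _).sub_odd odd_one, ?_, fun e => ?_⟩
    · push_cast; nlinarith
    · push_cast at e
      have : (u - r) * (u - r + 1 / 2) = 0 := by linarith
      rcases mul_eq_zero.1 this with h | h
      · exact ⟨2 * r, even_two_mul _, Or.inl (by push_cast; linarith), rfl⟩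
      · refine ⟨2 * r - 2, (even_two_mul _).sub even_two, Or.inr (by push_cast; linarith), ?_⟩
        push_cast
        have : u = r - 1 / 2 := by linarith
        rw [this]; ring

/-- The squared length of a vector of `ℝ⁴`. -/
def nsq (u0 u1 u2 u3 : ℝ) : ℝ := u0 ^ 2 + u1 ^ 2 + u2 ^ 2 + u3 ^ 2
/-- The dot product in `ℝ⁴`. -/
def dot (u0 u1 u2 u3 v0 v1 v2 v3 : ℝ) : ℝ := u0 * v0 + u1 * v1 + u2 * v2 + u3 * v3

/-- The covering radius of the Hurwitz order is `1/√2`; when no translate is strictly closer, the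
translate can be chosen with all coordinates `0` or `1/2`. -/
theorem hurwitz_cover (u0 u1 u2 u3 : ℝ) : ∃ p0 p1 p2 p3 : ℤ,
    2 ∣ p0 - p3 ∧ 2 ∣ p1 - p3 ∧ 2 ∣ p2 - p3 ∧
    (nsq (u0 - p0 / 2) (u1 - p1 / 2) (u2 - p2 / 2) (u3 - p3 / 2) < 1 / 2 ∨
     nsq (u0 - p0 / 2) (u1 - p1 / 2) (u2 - p2 / 2) (u3 - p3 / 2) = 1 / 2 ∧
      (u0 - p0 / 2 = 0 ∨ u0 - p0 / 2 = 1 / 2) ∧ (u1 - p1 / 2 = 0 ∨ u1 - p1 / 2 = 1 / 2) ∧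
      (u2 - p2 / 2 = 0 ∨ u2 - p2 / 2 = 1 / 2) ∧ (u3 - p3 / 2 = 0 ∨ u3 - p3 / 2 = 1 / 2)) := by
  unfold nsq
  obtain ⟨m0, n0, hm0, hn0, hle0, he0⟩ := round_two u0
  obtain ⟨m1, n1, hm1, hn1, hle1, he1⟩ := round_two u1
  obtain ⟨m2, n2, hm2, hn2, hle2, he2⟩ := round_two u2
  obtain ⟨m3, n3, hm3, hn3, hle3, he3⟩ := round_two u3
  by_cases hm : (u0 - m0 / 2) ^ 2 + (u1 - m1 / 2) ^ 2 + (u2 - m2 / 2) ^ 2 + (u3 - m3 / 2) ^ 2 < 1 / 2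
  · exact ⟨m0, m1, m2, m3, (hm0.sub hm3).two_dvd, (hm1.sub hm3).two_dvd, (hm2.sub hm3).two_dvd,
      Or.inl hm⟩
  by_cases hn : (u0 - n0 / 2) ^ 2 + (u1 - n1 / 2) ^ 2 + (u2 - n2 / 2) ^ 2 + (u3 - n3 / 2) ^ 2 < 1 / 2
  · exact ⟨n0, n1, n2, n3, (hn0.sub_odd hn3).two_dvd, (hn1.sub_odd hn3).two_dvd,
      (hn2.sub_odd hn3).two_dvd, Or.inl hn⟩
  obtain ⟨k0, hk0, hc0, hs0⟩ := he0 (by linarith)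
  obtain ⟨k1, hk1, hc1, hs1⟩ := he1 (by linarith)
  obtain ⟨k2, hk2, hc2, hs2⟩ := he2 (by linarith)
  obtain ⟨k3, hk3, hc3, hs3⟩ := he3 (by linarith)
  exact ⟨k0, k1, k2, k3, (hk0.sub hk3).two_dvd, (hk1.sub hk3).two_dvd, (hk2.sub hk3).two_dvd,
    Or.inr ⟨by linarith, hc0, hc1, hc2, hc3⟩⟩

/-- Moving the rounding of one coordinate to the second nearest integer. -/
theorem round_flip (y : ℝ) : ∃ m : ℤ, ∃ n : ℤ, |y - m| ≤ 1 / 2 ∧ (n = m + 1 ∨ n = m - 1) ∧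
    (y - n) ^ 2 = (y - m) ^ 2 + 1 - 2 * |y - m| := by
  have h := abs_sub_round y
  rcases le_total 0 (y - round y) with h0 | h0
  · refine ⟨round y, round y + 1, h, Or.inl rfl, ?_⟩
    rw [abs_of_nonneg h0]; push_cast; ring
  · refine ⟨round y, round y - 1, h, Or.inr rfl, ?_⟩
    rw [abs_of_nonpos h0]; push_cast; ring

/-- The covering radius of the root lattice `D₄` is `1`. -/
theorem D4_cover (y0 y1 y2 y3 : ℝ) : ∃ q0 q1 q2 q3 : ℤ, 2 ∣ q0 + q1 + q2 + q3 ∧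
    nsq (y0 - q0) (y1 - q1) (y2 - q2) (y3 - q3) ≤ 1 := by
  unfold nsq
  obtain ⟨m0, n0, h0, hn0, e0⟩ := round_flip y0
  obtain ⟨m1, n1, h1, hn1, e1⟩ := round_flip y1
  obtain ⟨m2, n2, h2, hn2, e2⟩ := round_flip y2
  obtain ⟨m3, n3, h3, hn3, e3⟩ := round_flip y3
  have s0 := sq_abs (y0 - m0)
  have s1 := sq_abs (y1 - m1)
  have s2 := sq_abs (y2 - m2)
  have s3 := sq_abs (y3 - m3)
  have p0 := abs_nonneg (y0 - m0)
  have p1 := abs_nonneg (y1 - m1)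
  have p2 := abs_nonneg (y2 - m2)
  have p3 := abs_nonneg (y3 - m3)
  set t0 := |y0 - m0|
  set t1 := |y1 - m1|
  set t2 := |y2 - m2|
  set t3 := |y3 - m3|
  by_cases hpar : 2 ∣ m0 + m1 + m2 + m3
  · refine ⟨m0, m1, m2, m3, hpar, ?_⟩
    have hq : ∀ t : ℝ, 0 ≤ t → t ≤ 1 / 2 → t ^ 2 ≤ 1 / 4 := fun t _ _ => by nlinarith
    linarith [hq t0 p0 h0, hq t1 p1 h1, hq t2 p2 h2, hq t3 p3 h3]
  have hmax : (t1 ≤ t0 ∧ t2 ≤ t0 ∧ t3 ≤ t0) ∨ (t0 ≤ t1 ∧ t2 ≤ t1 ∧ t3 ≤ t1) ∨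
      (t0 ≤ t2 ∧ t1 ≤ t2 ∧ t3 ≤ t2) ∨ (t0 ≤ t3 ∧ t1 ≤ t3 ∧ t2 ≤ t3) := by
    rcases le_total t0 t1 with a | a <;> rcases le_total t2 t3 with b | b
    · rcases le_total t1 t3 with c | c
      · exact Or.inr (Or.inr (Or.inr ⟨a.trans c, c, b⟩))
      · exact Or.inr (Or.inl ⟨a, b.trans c, c⟩)
    · rcases le_total t1 t2 with c | c
      · exact Or.inr (Or.inr (Or.inl ⟨a.trans c, c, b⟩))
      · exact Or.inr (Or.inl ⟨a, c, b.trans c⟩)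
    · rcases le_total t0 t3 with c | c
      · exact Or.inr (Or.inr (Or.inr ⟨c, a.trans c, b⟩))
      · exact Or.inl ⟨a, b.trans c, c⟩
    · rcases le_total t0 t2 with c | c
      · exact Or.inr (Or.inr (Or.inl ⟨c, a.trans c, b⟩))
      · exact Or.inl ⟨a, c, b.trans c⟩
  -- if `t ≤ 1/2` is the largest of the distances, then `4 t² + 1 - 2 t ≤ 1`
  have key : ∀ t a b c : ℝ, 0 ≤ a → 0 ≤ b → 0 ≤ c → a ≤ t → b ≤ t → c ≤ t → t ≤ 1 / 2 →
      t ^ 2 + 1 - 2 * t + (a ^ 2 + b ^ 2 + c ^ 2) ≤ 1 := by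
    intro t a b c ha hb hc hat hbt hct ht
    nlinarith [mul_self_le_mul_self ha hat, mul_self_le_mul_self hb hbt,
      mul_self_le_mul_self hc hct]
  rcases hmax with ⟨a, b, c⟩ | ⟨a, b, c⟩ | ⟨a, b, c⟩ | ⟨a, b, c⟩
  · refine ⟨n0, m1, m2, m3, by omega, ?_⟩
    have := key t0 t1 t2 t3 p1 p2 p3 a b c h0
    linarith
  · refine ⟨m0, n1, m2, m3, by omega, ?_⟩
    have := key t1 t0 t2 t3 p0 p2 p3 a b c h1
    linarith
  · refine ⟨m0, m1, n2, m3, by omega, ?_⟩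
    have := key t2 t0 t1 t3 p0 p1 p3 a b c h2
    linarith
  · refine ⟨m0, m1, m2, n3, by omega, ?_⟩
    have := key t3 t0 t1 t2 p0 p1 p2 a b c h3
    linarith

/-- The Euclidean property: every `u + v √2` with `u, v ∈ ℝ⁴` can be translated by an element
`p / 2 + (q / 2) √2` of the maximal order so that
`|u + v √2|² |u - v √2|² = (|u|² + 2 |v|²)² - 8 (u · v)² < 1`. -/
theorem euclid_cover (u0 u1 u2 u3 v0 v1 v2 v3 : ℝ) : ∃ p0 p1 p2 p3 q0 q1 q2 q3 : ℤ,
    2 ∣ p0 - p3 ∧ 2 ∣ p1 - p3 ∧ 2 ∣ p2 - p3 ∧ 2 ∣ q0 + q1 + q2 + q3 ∧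
    (nsq (u0 - p0 / 2) (u1 - p1 / 2) (u2 - p2 / 2) (u3 - p3 / 2) +
      2 * nsq (v0 - q0 / 2) (v1 - q1 / 2) (v2 - q2 / 2) (v3 - q3 / 2)) ^ 2 -
    8 * dot (u0 - p0 / 2) (u1 - p1 / 2) (u2 - p2 / 2) (u3 - p3 / 2)
      (v0 - q0 / 2) (v1 - q1 / 2) (v2 - q2 / 2) (v3 - q3 / 2) ^ 2 < 1 := by
  obtain ⟨q0, q1, q2, q3, hq, hV⟩ := D4_cover (2 * v0) (2 * v1) (2 * v2) (2 * v3)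
  obtain ⟨p0, p1, p2, p3, d0, d1, d2, hU⟩ := hurwitz_cover u0 u1 u2 u3
  have hV' : nsq (v0 - q0 / 2) (v1 - q1 / 2) (v2 - q2 / 2) (v3 - q3 / 2) ≤ 1 / 4 := by
    unfold nsq at hV ⊢; linarith
  clear hV
  generalize hx0 : v0 - q0 / 2 = x0 at *
  generalize hx1 : v1 - q1 / 2 = x1 at *
  generalize hx2 : v2 - q2 / 2 = x2 at *
  generalize hx3 : v3 - q3 / 2 = x3 at *
  have hVn : 0 ≤ nsq x0 x1 x2 x3 := by unfold nsq; positivity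
  rcases hU with hU | ⟨hU, c0, c1, c2, c3⟩
  · refine ⟨p0, p1, p2, p3, q0, q1, q2, q3, d0, d1, d2, hq, ?_⟩
    rw [hx0, hx1, hx2, hx3]
    have : 0 ≤ nsq (u0 - p0 / 2) (u1 - p1 / 2) (u2 - p2 / 2) (u3 - p3 / 2) := by
      unfold nsq; positivity
    generalize nsq (u0 - p0 / 2) (u1 - p1 / 2) (u2 - p2 / 2) (u3 - p3 / 2) = U at *
    generalize dot _ _ _ _ _ _ _ _ = W
    nlinarith [sq_nonneg W]
  by_contra! hcon
  -- at a deep hole `u`, the vector `v` would have to be orthogonal to all nearest lattice vectors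
  have key : ∀ e0 e1 e2 e3 : ℤ, 2 ∣ e0 - e3 → 2 ∣ e1 - e3 → 2 ∣ e2 - e3 →
      nsq (u0 - p0 / 2 - e0 / 2) (u1 - p1 / 2 - e1 / 2) (u2 - p2 / 2 - e2 / 2)
        (u3 - p3 / 2 - e3 / 2) = 1 / 2 →
      nsq x0 x1 x2 x3 = 1 / 4 ∧ dot (u0 - p0 / 2 - e0 / 2) (u1 - p1 / 2 - e1 / 2)
        (u2 - p2 / 2 - e2 / 2) (u3 - p3 / 2 - e3 / 2) x0 x1 x2 x3 = 0 := by
    intro e0 e1 e2 e3 g0 g1 g2 hn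
    have h := hcon (p0 + e0) (p1 + e1) (p2 + e2) (p3 + e3) q0 q1 q2 q3 (by omega) (by omega)
      (by omega) hq
    rw [hx0, hx1, hx2, hx3] at h
    push_cast at h
    have r : ∀ a b c : ℝ, a - (b + c) / 2 = a - b / 2 - c / 2 := fun a b c => by ring
    rw [r, r, r, r, hn] at h
    generalize dot _ _ _ _ _ _ _ _ = W at *
    have hVe : nsq x0 x1 x2 x3 = 1 / 4 := by nlinarith [sq_nonneg W]
    refine ⟨hVe, ?_⟩
    rw [hVe] at h
    have : W ^ 2 ≤ 0 := by linarith
    exact pow_eq_zero_iff (two_ne_zero) |>.1 (le_antisymm this (sq_nonneg W))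
  generalize u0 - p0 / 2 = w0 at *
  generalize u1 - p1 / 2 = w1 at *
  generalize u2 - p2 / 2 = w2 at *
  generalize u3 - p3 / 2 = w3 at *
  unfold nsq dot at *
  have k0 := key 0 0 0 0 (by norm_num) (by norm_num) (by norm_num)
  have ka := key 2 0 0 0 (by norm_num) (by norm_num) (by norm_num)
  have kb := key 0 2 0 0 (by norm_num) (by norm_num) (by norm_num)
  have kc := key 0 0 2 0 (by norm_num) (by norm_num) (by norm_num)
  have kd := key 1 1 1 1 (by norm_num) (by norm_num) (by norm_num)
  have ke := key (-1) 1 1 1 (by norm_num) (by norm_num) (by norm_num)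
  have kf := key 1 (-1) 1 1 (by norm_num) (by norm_num) (by norm_num)
  have kg := key 1 1 (-1) 1 (by norm_num) (by norm_num) (by norm_num)
  have kh := key 1 1 1 (-1) (by norm_num) (by norm_num) (by norm_num)
  clear key hcon
  rcases c0 with rfl | rfl <;> rcases c1 with rfl | rfl <;> rcases c2 with rfl | rfl <;>
    rcases c3 with rfl | rfl <;> norm_num at hU
  all_goals norm_num at k0 ka kb kc kd ke kf kg kh
  all_goals
    have z : x0 = 0 ∧ x1 = 0 ∧ x2 = 0 ∧ x3 = 0 := by
      clear hV' hVn
      grind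
    obtain ⟨rfl, rfl, rfl, rfl⟩ := z
    norm_num at k0
end QO

/-! ### A norm-Euclidean quaternion order -/

namespace QO
open Quaternion

@[simp] theorem s1_rt : s1 rt = √2 := by simp [s1_apply]

theorem s1_inj {x y : R} (h : s1 x = s1 y) : x = y := by
  by_contra hne
  exact s1_ne_zero (sub_ne_zero.2 hne) (by rw [map_sub, h, sub_self])

/-- The real quaternion with given coordinates. -/
noncomputable def mkq (a b c d : ℝ) : ℍ[ℝ] := ⟨a, b, c, d⟩

@[simp] theorem mkq_re (a b c d : ℝ) : (mkq a b c d).re = a := rfl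
@[simp] theorem mkq_imI (a b c d : ℝ) : (mkq a b c d).imI = b := rfl
@[simp] theorem mkq_imJ (a b c d : ℝ) : (mkq a b c d).imJ = c := rfl
@[simp] theorem mkq_imK (a b c d : ℝ) : (mkq a b c d).imK = d := rfl

/-- The element `x₀ + x₁ (1 + i)/√2 + x₂ (1 + j)/√2 + x₃ (1 + i + j + k)/2`. -/
noncomputable def hq (x0 x1 x2 x3 : R) : ℍ[ℝ] :=
  mkq (s1 (2 * x0 + rt * (x1 + x2) + x3) / 2) (s1 (rt * x1 + x3) / 2) (s1 (rt * x2 + x3) / 2)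
    (s1 x3 / 2)

/-- Membership in the maximal order spanned over `ℤ[√2]` by `1`, `(1 + i)/√2`, `(1 + j)/√2` and
`(1 + i + j + k)/2`, realised inside the real quaternions through `√2 ↦ √2`. -/
def InH (x : ℍ[ℝ]) : Prop := ∃ x0 x1 x2 x3 : R, x = hq x0 x1 x2 x3

theorem hq_add (x0 x1 x2 x3 y0 y1 y2 y3 : R) :
    hq x0 x1 x2 x3 + hq y0 y1 y2 y3 = hq (x0 + y0) (x1 + y1) (x2 + y2) (x3 + y3) := by
  ext <;> simp [hq] <;> ring

theorem hq_neg (x0 x1 x2 x3 : R) : -hq x0 x1 x2 x3 = hq (-x0) (-x1) (-x2) (-x3) := by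
  ext <;> simp [hq] <;> ring

theorem hq_star (x0 x1 x2 x3 : R) : star (hq x0 x1 x2 x3) =
    hq (x0 + rt * x1 + rt * x2 + x3) (-x1) (-x2) (-x3) := by
  ext <;> simp [hq] <;> ring

theorem hq_coe (r : R) : ((s1 r : ℝ) : ℍ[ℝ]) = hq r 0 0 0 := by
  ext <;> simp [hq]

theorem hq_mul (x0 x1 x2 x3 y0 y1 y2 y3 : R) :
    hq x0 x1 x2 x3 * hq y0 y1 y2 y3 = hq
      (x0 * y0 - x1 * y1 - x2 * y1 - x2 * y2 - rt * x2 * y3 - rt * x3 * y1 - x3 * y3)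
      (x0 * y1 + x1 * y0 + rt * x1 * y1 + rt * x2 * y1 + x2 * y3 + x3 * y1 - x3 * y2)
      (x0 * y2 - x1 * y3 + x2 * y0 + rt * x2 * y1 + rt * x2 * y2 + x2 * y3 + x3 * y1)
      (x0 * y3 + x1 * y2 + rt * x1 * y3 - x2 * y1 + x3 * y0 + rt * x3 * y2 + x3 * y3) := by
  have h2 : √2 * √2 = 2 := by norm_num
  ext <;> simp [hq] <;> grind

theorem hq_normSq (x0 x1 x2 x3 : R) : normSq (hq x0 x1 x2 x3) =
    s1 (x0 ^ 2 + x1 ^ 2 + x2 ^ 2 + x3 ^ 2 + rt * (x0 * x1 + x0 * x2 + x1 * x3 + x2 * x3)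
      + x0 * x3 + x1 * x2) := by
  have h2 : √2 * √2 = 2 := by norm_num
  rw [normSq_def']; simp [hq]; grind

theorem hq_trace (x0 x1 x2 x3 : R) : 2 * (hq x0 x1 x2 x3).re =
    s1 (2 * x0 + rt * x1 + rt * x2 + x3) := by
  simp [hq]; ring

theorem InH.add {x y : ℍ[ℝ]} (hx : InH x) (hy : InH y) : InH (x + y) := by
  obtain ⟨x0, x1, x2, x3, rfl⟩ := hx
  obtain ⟨y0, y1, y2, y3, rfl⟩ := hy
  exact ⟨_, _, _, _, hq_add ..⟩

theorem InH.mul {x y : ℍ[ℝ]} (hx : InH x) (hy : InH y) : InH (x * y) := by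
  obtain ⟨x0, x1, x2, x3, rfl⟩ := hx
  obtain ⟨y0, y1, y2, y3, rfl⟩ := hy
  exact ⟨_, _, _, _, hq_mul ..⟩

theorem InH.neg {x : ℍ[ℝ]} (hx : InH x) : InH (-x) := by
  obtain ⟨x0, x1, x2, x3, rfl⟩ := hx
  exact ⟨_, _, _, _, hq_neg ..⟩

theorem InH.sub {x y : ℍ[ℝ]} (hx : InH x) (hy : InH y) : InH (x - y) := by
  rw [sub_eq_add_neg]; exact hx.add hy.neg

theorem InH.star {x : ℍ[ℝ]} (hx : InH x) : InH (star x) := by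
  obtain ⟨x0, x1, x2, x3, rfl⟩ := hx
  exact ⟨_, _, _, _, hq_star ..⟩

theorem InH_coe (r : R) : InH ((s1 r : ℝ) : ℍ[ℝ]) := ⟨_, _, _, _, hq_coe r⟩

theorem InH_zero : InH 0 := by simpa using InH_coe 0
theorem InH_one : InH 1 := by simpa using InH_coe 1

theorem InH.trace {x : ℍ[ℝ]} (hx : InH x) : ∃ t : R, 2 * x.re = s1 t := by
  obtain ⟨x0, x1, x2, x3, rfl⟩ := hx
  exact ⟨_, hq_trace ..⟩

/-- The doubled coordinates of an element of the order. -/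
theorem InH.coords {x : ℍ[ℝ]} (hx : InH x) : ∃ A B C D : R,
    x = mkq (s1 A / 2) (s1 B / 2) (s1 C / 2) (s1 D / 2) := by
  obtain ⟨x0, x1, x2, x3, rfl⟩ := hx
  exact ⟨_, _, _, _, rfl⟩

theorem normSq_halves (A B C D : R) : 4 * normSq (mkq (s1 A / 2) (s1 B / 2) (s1 C / 2) (s1 D / 2)) =
    s1 (A ^ 2 + B ^ 2 + C ^ 2 + D ^ 2) := by
  rw [normSq_def']; simp; ring

/-- Sums of squares in `ℤ[√2]` are zero or totally positive. -/
theorem TP_sumsq {A B C D : R} : (A = 0 ∧ B = 0 ∧ C = 0 ∧ D = 0) ∨ TP (A ^ 2 + B ^ 2 + C ^ 2 + D ^ 2) := by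
  by_cases h : A = 0 ∧ B = 0 ∧ C = 0
  · by_cases hD : D = 0
    · exact Or.inl ⟨h.1, h.2.1, h.2.2, hD⟩
    · right; rw [h.1, h.2.1, h.2.2]; simpa using TP_sq hD
  · right
    have := TP_diag TP_one TP_one h
    rw [one_mul, one_mul] at this
    by_cases hD : D = 0
    · rw [hD]; simpa using this
    · exact this.add (TP_sq hD)

theorem InH.norm {x : ℍ[ℝ]} (hx : InH x) : ∃ n : R, normSq x = s1 n := by
  obtain ⟨x0, x1, x2, x3, rfl⟩ := hx
  exact ⟨_, hq_normSq ..⟩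

theorem InH.norm_TP {x : ℍ[ℝ]} (hx : InH x) (h0 : x ≠ 0) {n : R} (hn : normSq x = s1 n) : TP n := by
  obtain ⟨A, B, C, D, rfl⟩ := hx.coords
  have h4 := normSq_halves A B C D
  rw [hn] at h4
  have h4' : 4 * n = A ^ 2 + B ^ 2 + C ^ 2 + D ^ 2 := by
    apply s1_inj
    rw [← h4, map_mul]
    congr 1
    exact map_ofNat s1 4
  rcases TP_sumsq (A := A) (B := B) (C := C) (D := D) with ⟨rfl, rfl, rfl, rfl⟩ | h
  · exact absurd (by ext <;> simp) h0
  · rw [← h4'] at h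
    exact TP.of_mul (by simpa using TP_natCast (n := 4) (by norm_num)) h

theorem InH_of_halves {A B C D : R} (h1 : rt ∣ B - D) (h2 : rt ∣ C - D) (h3 : 2 ∣ A - B - C + D) :
    InH (mkq (s1 A / 2) (s1 B / 2) (s1 C / 2) (s1 D / 2)) := by
  obtain ⟨x1, e1⟩ := h1
  obtain ⟨x2, e2⟩ := h2
  obtain ⟨x0, e0⟩ := h3
  refine ⟨x0, x1, x2, D, ?_⟩
  have eB : rt * x1 + D = B := by linear_combination -e1
  have eC : rt * x2 + D = C := by linear_combination -e2
  have eA : 2 * x0 + rt * (x1 + x2) + D = A := by linear_combination -e0 - e1 - e2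
  rw [hq, eA, eB, eC]

/-- A real number in the order lies in `ℤ[√2]`. -/
theorem InH.real {r : ℝ} (h : InH (r : ℍ[ℝ])) : ∃ k : R, r = s1 k := by
  obtain ⟨x0, x1, x2, x3, e⟩ := h
  have e3 := congrArg QuaternionAlgebra.imK e
  have e1 := congrArg QuaternionAlgebra.imI e
  have e2 := congrArg QuaternionAlgebra.imJ e
  have e0 := congrArg QuaternionAlgebra.re e
  simp [hq] at e0 e1 e2 e3
  have h3 : s1 x3 = 0 := by linarith
  have h1 : √2 * s1 x1 = 0 := by linarith
  have h2 : √2 * s1 x2 = 0 := by linarith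
  exact ⟨x0, by linarith⟩

/-- The order is norm-Euclidean, with quotients on the left. -/
theorem euclid {x y : ℍ[ℝ]} (hx : InH x) (hy : InH y) (hy0 : y ≠ 0) {m : R} (hm : normSq y = s1 m) :
    ∃ η n, InH η ∧ normSq (x - η * y) = s1 n ∧ n.norm.natAbs < m.norm.natAbs := by
  have hmTP := hy.norm_TP hy0 hm
  have hMpos := ((TP_iff m).1 hmTP).2
  set M := m.norm with hM
  have hMR : (M : R) = m * star m := Zsqrtd.norm_eq_mul_conj m
  have hMr : (0:ℝ) < M := by exact_mod_cast hMpos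
  have hw : InH (x * star y * ((s1 (star m) : ℝ) : ℍ[ℝ])) := (hx.mul hy.star).mul (InH_coe _)
  obtain ⟨A0, A1, A2, A3, hA⟩ := hw.coords
  obtain ⟨p0, p1, p2, p3, q0, q1, q2, q3, d0, d1, d2, dq, hlt⟩ := euclid_cover
    (A0.re / (2 * M)) (A1.re / (2 * M)) (A2.re / (2 * M)) (A3.re / (2 * M))
    (A0.im / (2 * M)) (A1.im / (2 * M)) (A2.im / (2 * M)) (A3.im / (2 * M))
  set B0 : R := ⟨p0, q0⟩ with hB0
  set B1 : R := ⟨p1, q1⟩ with hB1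
  set B2 : R := ⟨p2, q2⟩ with hB2
  set B3 : R := ⟨p3, q3⟩ with hB3
  have hη : InH (mkq (s1 B0 / 2) (s1 B1 / 2) (s1 B2 / 2) (s1 B3 / 2)) := by
    refine InH_of_halves ?_ ?_ ?_
    · rw [rt_dvd_iff]; exact d1
    · rw [rt_dvd_iff]; exact d2
    · rw [two_dvd_iff]
      simp [hB0, hB1, hB2, hB3]
      omega
  set η : ℍ[ℝ] := mkq (s1 B0 / 2) (s1 B1 / 2) (s1 B2 / 2) (s1 B3 / 2) with hηdef
  obtain ⟨n, hn⟩ := (hx.sub (hη.mul hy)).norm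
  refine ⟨η, n, hη, hn, ?_⟩
  have hmm : s1 m * s1 (star m) = M := by rw [← map_mul, ← hMR]; simp
  have hprod : (x - η * y) * star y * ((s1 (star m) : ℝ) : ℍ[ℝ]) =
      mkq (s1 (A0 - M * B0) / 2) (s1 (A1 - M * B1) / 2) (s1 (A2 - M * B2) / 2) (s1 (A3 - M * B3) / 2) := by
    have e : (x - η * y) * star y * ((s1 (star m) : ℝ) : ℍ[ℝ]) =
        x * star y * ((s1 (star m) : ℝ) : ℍ[ℝ]) - η * ((M : ℝ) : ℍ[ℝ]) := by
      rw [sub_mul, sub_mul, mul_assoc η, self_mul_star, hm, mul_assoc η, ← coe_mul, hmm]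
    rw [e, hA, hηdef]
    ext <;> simp <;> ring
  have hnorm := congrArg (fun z => 4 * normSq z) hprod
  simp only [map_mul, normSq_star, hn, hm, normSq_coe, normSq_halves] at hnorm
  set S := (A0 - M * B0) ^ 2 + (A1 - M * B1) ^ 2 + (A2 - M * B2) ^ 2 + (A3 - M * B3) ^ 2 with hS
  have hSR : 4 * n * star m * M = S := by
    apply s1_inj
    rw [← hnorm]
    simp only [map_mul]
    rw [hMR, map_mul, show s1 4 = 4 from map_ofNat s1 4]
    ring
  have hSn := congrArg Zsqrtd.norm hSR
  rw [Zsqrtd.norm_mul, Zsqrtd.norm_mul, Zsqrtd.norm_mul, Zsqrtd.norm_conj, ← hM,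
    Zsqrtd.norm_intCast, show (4 : R).norm = 16 from rfl, norm_eq S] at hSn
  have hre : (S.re : ℝ) = 4 * M ^ 2 * (nsq (A0.re / (2 * M) - p0 / 2) (A1.re / (2 * M) - p1 / 2)
      (A2.re / (2 * M) - p2 / 2) (A3.re / (2 * M) - p3 / 2) +
      2 * nsq (A0.im / (2 * M) - q0 / 2) (A1.im / (2 * M) - q1 / 2)
      (A2.im / (2 * M) - q2 / 2) (A3.im / (2 * M) - q3 / 2)) := by
    simp [hS, pow_two, hB0, hB1, hB2, hB3, nsq]
    field_simp
    ring
  have him : (S.im : ℝ) = 8 * M ^ 2 * dot (A0.re / (2 * M) - p0 / 2) (A1.re / (2 * M) - p1 / 2)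
      (A2.re / (2 * M) - p2 / 2) (A3.re / (2 * M) - p3 / 2)
      (A0.im / (2 * M) - q0 / 2) (A1.im / (2 * M) - q1 / 2)
      (A2.im / (2 * M) - q2 / 2) (A3.im / (2 * M) - q3 / 2) := by
    simp [hS, pow_two, hB0, hB1, hB2, hB3, dot]
    field_simp
    ring
  have hSnr := congrArg (Int.cast : ℤ → ℝ) hSn
  push_cast at hSnr
  rw [hre, him] at hSnr
  have hlt' : (n.norm : ℝ) < M := by
    have h1 : (16 * M ^ 3) * (n.norm : ℝ) < (16 * M ^ 3) * M := by
      have := mul_lt_mul_of_pos_left hlt (show (0:ℝ) < 16 * M ^ 4 by positivity)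
      linear_combination this + hSnr
    exact lt_of_mul_lt_mul_left h1 (by positivity)
  have hlt'' : n.norm < M := by exact_mod_cast hlt'
  have hn0 : 0 ≤ n.norm := by
    by_cases h : x - η * y = 0
    · rw [h] at hn
      have : n = 0 := s1_inj (by rw [← hn]; simp)
      rw [this]; simp
    · exact ((TP_iff n).1 ((hx.sub (hη.mul hy)).norm_TP h hn)).2.le
  omega

/-- Left ideals with two generators are principal. -/
theorem exists_gcdH {x y : ℍ[ℝ]} (hx : InH x) (hy : InH y) : ∃ g p q c d : ℍ[ℝ],
    InH g ∧ InH p ∧ InH q ∧ InH c ∧ InH d ∧ x = p * g ∧ y = q * g ∧ g = c * x + d * y := by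
  obtain ⟨m, hm⟩ := hy.norm
  induction hk : m.norm.natAbs using Nat.strong_induction_on generalizing x y m with
  | _ k ih =>
  by_cases hy0 : y = 0
  · exact ⟨x, 1, 0, 1, 0, hx, InH_one, InH_zero, InH_one, InH_zero, by simp, by simp [hy0],
      by simp⟩
  obtain ⟨η, n, hη, hn, hlt⟩ := euclid hx hy hy0 hm
  obtain ⟨g, p, q, c, d, hg, hp, hq, hc, hd, e1, e2, e3⟩ :=
    ih _ (hk ▸ hlt) hy (hx.sub (hη.mul hy)) n hn rfl
  refine ⟨g, q + η * p, p, d, c - d * η, hg, hq.add (hη.mul hp), hp, hd, hc.sub (hd.mul hη), ?_, e1,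
    ?_⟩
  · rw [add_mul, ← e2, mul_assoc, ← e1]; abel
  · nth_rewrite 1 [e3]
    noncomm_ring
end QO

/-! ### Binary forms as norm forms of the order -/

namespace QO
open Quaternion

theorem re_mul_comm (x y : ℍ[ℝ]) : (x * y).re = (y * x).re := by
  simp only [re_mul]; ring

theorem coe_zero_imp {r : ℝ} (h : (r : ℍ[ℝ]) = 0) : r = 0 := by
  simpa using congrArg QuaternionAlgebra.re h

/-- An element of the order of given trace `b` and norm `ac`, as soon as the discriminant
`4ac - b²` is, up to a square, a sum of three squares: conjugate the obvious quaternion over the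
fraction field by a generator of the left ideal of its denominators. -/
theorem exists_trace_norm {a b c d x y z : R} (hd : d ≠ 0)
    (h : d ^ 2 * (4 * (a * c) - b ^ 2) = x ^ 2 + y ^ 2 + z ^ 2) :
    ∃ η, InH η ∧ normSq η = s1 (a * c) ∧ 2 * η.re = s1 b := by
  have hd1 : s1 d ≠ 0 := s1_ne_zero hd
  have h4 : s1 4 = 4 := map_ofNat s1 4
  have hr := congrArg s1 h
  simp only [map_mul, map_add, map_sub, map_pow, h4] at hr
  obtain ⟨θ, hθ⟩ : ∃ θ, θ = mkq (s1 b / 2) (s1 x / (2 * s1 d)) (s1 y / (2 * s1 d))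
    (s1 z / (2 * s1 d)) := ⟨_, rfl⟩
  have hN : normSq θ = s1 (a * c) := by
    rw [hθ, normSq_def']
    simp only [mkq_re, mkq_imI, mkq_imJ, mkq_imK, map_mul]
    field_simp
    linear_combination -hr
  have hTr : 2 * θ.re = s1 b := by rw [hθ, mkq_re]; ring
  have hT : InH (((s1 (2 * d) : ℝ) : ℍ[ℝ]) * θ) := by
    have := InH_of_halves (A := 2 * (d * b)) (B := 2 * x) (C := 2 * y) (D := 2 * z)
      (rt_dvd_two.trans ⟨x - z, by ring⟩) (rt_dvd_two.trans ⟨y - z, by ring⟩)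
      ⟨d * b - x - y + z, by ring⟩
    convert this using 1
    rw [hθ]
    ext <;> simp <;> field_simp
  have hsq : θ * θ = ((s1 b : ℝ) : ℍ[ℝ]) * θ - ((s1 (a * c) : ℝ) : ℍ[ℝ]) := by
    rw [← hN, ← self_mul_star, ← hTr, coe_commutes, ← mul_sub]
    congr 1
    ext <;> simp <;> ring
  obtain ⟨γ, p, q, c1, d1, hγ, hp, hq, hc, hd', e1, e2, e3⟩ := exists_gcdH (InH_coe (2 * d)) hT
  have hγ0 : γ ≠ 0 := by
    rintro rfl
    rw [mul_zero] at e1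
    have : s1 (2 * d) = 0 := coe_zero_imp e1
    exact s1_ne_zero (mul_ne_zero two_ne_zeroR hd) this
  have hηγ : (c1 * q + d1 * (((s1 b : ℝ) : ℍ[ℝ]) * q - ((s1 (a * c) : ℝ) : ℍ[ℝ]) * p)) * γ
      = γ * θ := by
    have h1 : (c1 * q + d1 * (((s1 b : ℝ) : ℍ[ℝ]) * q - ((s1 (a * c) : ℝ) : ℍ[ℝ]) * p)) * γ =
      c1 * (q * γ) + d1 * (((s1 b : ℝ) : ℍ[ℝ]) * (q * γ) - ((s1 (a * c) : ℝ) : ℍ[ℝ]) * (p * γ)) := by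
      noncomm_ring
    rw [h1, ← e1, ← e2]
    nth_rewrite 1 [e3]
    rw [add_mul, mul_assoc c1, mul_assoc d1, mul_assoc _ θ θ, hsq, mul_sub _ _ (coe (s1 (a * c))),
      ← mul_assoc _ _ θ, ← mul_assoc _ _ θ, coe_commutes _ (coe (s1 (2 * d))),
      coe_commutes _ (coe (s1 (2 * d)))]
    simp only [mul_assoc]
  refine ⟨_, (hc.mul hq).add (hd'.mul (((InH_coe b).mul hq).sub ((InH_coe (a * c)).mul hp))), ?_, ?_⟩
  · have := congrArg normSq hηγ
    rw [map_mul normSq, map_mul normSq γ, mul_comm, hN] at this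
    exact mul_left_cancel₀ (normSq_ne_zero.2 hγ0) this
  · have := congrArg (· * γ⁻¹) hηγ
    simp only [mul_assoc, mul_inv_cancel₀ hγ0, mul_one] at this
    have h3 := congrArg QuaternionAlgebra.re this
    rw [re_mul_comm, mul_assoc, inv_mul_cancel₀ hγ0, mul_one] at h3
    rw [h3, hTr]

/-- The case of `gram_exists` where `a, b, c` generate the unit ideal: with `η` of trace `b` and norm
`ac`, a generator `α` of the left ideal generated by `a` and `η` has norm `a` up to the square of a
unit, and `η` is a left multiple of `α`. -/
theorem gram_prim {a b c d x y z r s t : R} (ha : TP a) (hprim : r * a + s * b + t * c = 1)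
    (hd : d ≠ 0) (h : d ^ 2 * (4 * (a * c) - b ^ 2) = x ^ 2 + y ^ 2 + z ^ 2) :
    ∃ α β, InH α ∧ InH β ∧ normSq α = s1 a ∧ normSq β = s1 c ∧ 2 * (α * star β).re = s1 b := by
  obtain ⟨η, hη, hηN, hηT⟩ := exists_trace_norm hd h
  have ha1 := s1_ne_zero ha.ne_zero
  obtain ⟨α, y, x, c2, d2, hα, hy, hx, hc2, hd2, e1, e2, e3⟩ := exists_gcdH (InH_coe a) hη
  have hα0 : α ≠ 0 := by
    rintro rfl
    rw [mul_zero] at e1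
    exact ha1 (coe_zero_imp e1)
  obtain ⟨n, hn⟩ := hα.norm
  obtain ⟨m1, hm1⟩ := hy.norm
  obtain ⟨m2, hm2⟩ := hx.norm
  obtain ⟨m3, hm3⟩ := (hy.mul hx.star).trace
  have hnTP := hα.norm_TP hα0 hn
  -- `a` divides `n`
  have hZ : ∃ Z, InH Z ∧ ((s1 n : ℝ) : ℍ[ℝ]) = ((s1 a : ℝ) : ℍ[ℝ]) * Z := by
    refine ⟨c2 * ((s1 a : ℝ) : ℍ[ℝ]) * star c2 + c2 * star η * star d2 + d2 * η * star c2
      + d2 * ((s1 c : ℝ) : ℍ[ℝ]) * star d2, ?_, ?_⟩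
    · exact ((((hc2.mul (InH_coe a)).mul hc2.star).add ((hc2.mul hη.star).mul hd2.star)).add
        ((hd2.mul hη).mul hc2.star)).add ((hd2.mul (InH_coe c)).mul hd2.star)
    · have hηη : η * star η = ((s1 a : ℝ) : ℍ[ℝ]) * ((s1 c : ℝ) : ℍ[ℝ]) := by
        rw [self_mul_star, hηN, map_mul, coe_mul]
      have hcm : ∀ w : ℍ[ℝ], w * ((s1 a : ℝ) : ℍ[ℝ]) = ((s1 a : ℝ) : ℍ[ℝ]) * w :=
        fun w => (coe_commutes _ w).symm
      rw [← hn, ← self_mul_star, e3, star_add, star_mul, star_mul, star_coe]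
      generalize ((s1 a : ℝ) : ℍ[ℝ]) = A at *
      have : (c2 * A + d2 * η) * (A * star c2 + star η * star d2) =
        (c2 * A) * A * star c2 + (c2 * A) * (star η * star d2) + (d2 * η * A) * star c2
          + d2 * (η * star η) * star d2 := by noncomm_ring
      rw [this, hηη, hcm (d2 * η), hcm c2, ← mul_assoc d2 A, hcm d2]
      have := hcm c2
      simp only [mul_add, mul_assoc, hcm]
  obtain ⟨Z, hZH, hZ⟩ := hZ
  have hZr : Z = ((s1 n / s1 a : ℝ) : ℍ[ℝ]) := by
    have ha2 : ((s1 a : ℝ) : ℍ[ℝ]) ≠ 0 := fun h0 => ha1 (coe_zero_imp h0)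
    apply mul_left_cancel₀ ha2
    rw [← hZ, ← coe_mul, mul_div_cancel₀ _ ha1]
  rw [hZr] at hZH
  obtain ⟨k, hk⟩ := hZH.real
  have hnk : n = a * k := s1_inj (by rw [map_mul, ← hk]; field_simp)
  -- `n` divides `a`
  have q1 : a ^ 2 = n * m1 := by
    apply s1_inj
    have := congrArg normSq e1
    rw [map_mul, hm1, hn, normSq_coe] at this
    rw [map_pow, this, map_mul, mul_comm]
  have q2 : a * c = n * m2 := by
    apply s1_inj
    have := congrArg normSq e2
    rw [map_mul, hm2, hn, hηN] at this
    rw [this, map_mul, mul_comm]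
  have q3 : a * b = n * m3 := by
    apply s1_inj
    have e : ((s1 a : ℝ) : ℍ[ℝ]) * star η = ((s1 n : ℝ) : ℍ[ℝ]) * (y * star x) := by
      rw [e1, e2, star_mul, mul_assoc, ← mul_assoc α, self_mul_star, hn, ← mul_assoc,
        ← coe_commutes, mul_assoc]
    have := congrArg QuaternionAlgebra.re e
    rw [coe_mul_eq_smul, coe_mul_eq_smul, re_smul, re_smul, re_star, smul_eq_mul, smul_eq_mul] at this
    rw [map_mul, map_mul, ← hηT, ← hm3]
    linear_combination 2 * this
  have hkk : k * (r * m1 + s * m3 + t * m2) = 1 := by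
    apply mul_left_cancel₀ ha.ne_zero
    linear_combination -(r * m1 + s * m3 + t * m2) * hnk - r * q1 - s * q3 - t * q2 + a * hprim
  have hku : IsUnit k := IsUnit.of_mul_eq_one _ hkk
  obtain ⟨w, hw, hkw⟩ := TP_unit_sq hku (TP.of_mul ha (hnk ▸ hnTP))
  obtain ⟨v, hv⟩ := hw.exists_right_inv
  refine ⟨((s1 v : ℝ) : ℍ[ℝ]) * α, star (x * ((s1 w : ℝ) : ℍ[ℝ])), (InH_coe v).mul hα,
    (hx.mul (InH_coe w)).star, ?_, ?_, ?_⟩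
  · rw [map_mul, normSq_coe, hn, hnk, hkw, ← map_pow, ← map_mul]
    congr 1
    linear_combination a * (w * v + 1) * hv
  · rw [normSq_star, map_mul, normSq_coe, hm2, ← map_pow, ← map_mul]
    congr 1
    apply mul_left_cancel₀ ha.ne_zero
    linear_combination -q2 - m2 * hnk - a * m2 * hkw
  · have hvw : ((s1 v : ℝ) : ℍ[ℝ]) * ((s1 w : ℝ) : ℍ[ℝ]) = 1 := by
      rw [← coe_mul, ← map_mul, mul_comm v, hv]; simp
    rw [star_star, ← hηT, e2, re_mul_comm x α, ← mul_assoc, ← coe_commutes, ← mul_assoc,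
      ← mul_assoc, ← coe_mul, mul_comm (s1 w), coe_mul, hvw, one_mul]

/-- A binary form `(a, b, c)` over `ℤ[√2]` with `a` totally positive whose discriminant is a sum of
three squares in the fraction field is the norm form of a pair of elements of the order. The
common factor of `a, b, c` is itself a norm from the order and is split off first. -/
theorem gram_exists {a b c : R} (ha : TP a) (h : ThreeSq (4 * (a * c) - b ^ 2)) :
    ∃ α β, InH α ∧ InH β ∧ normSq α = s1 a ∧ normSq β = s1 c ∧ 2 * (α * star β).re = s1 b := by
  obtain ⟨d1, a1, b1, p1, q1, hd1, ea, eb, e1⟩ := exists_gcd a b (Or.inl ha.ne_zero)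
  obtain ⟨d2, a2, c2, p2, q2, hd2, ed, ec, e2⟩ := exists_gcd d1 c (Or.inl hd1)
  obtain ⟨u, hu, huT⟩ := exists_unit_TP hd2
  obtain ⟨v, hv⟩ := hu.exists_right_inv
  obtain ⟨γ, _, hγ, -, hγN, -, -⟩ : ∃ α β, InH α ∧ InH β ∧ normSq α = s1 (u * d2) ∧
      normSq β = s1 1 ∧ 2 * (α * star β).re = s1 0 := by
    have h4 : TP (4 * ((u * d2) * 1) - 0 ^ 2) := by
      have : TP (4 : R) := by simpa using TP_natCast (n := 4) (by norm_num)
      simpa using this.mul huT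
    obtain ⟨d, x, y, z, hd, e⟩ := h4.threeSq
    exact gram_prim huT (r := 0) (s := 0) (t := 1) (by ring) hd e
  obtain ⟨d, x, y, z, hd, e⟩ := h
  have ea' : a = (u * d2) * (v * a2 * a1) := by
    rw [ea, ed]; linear_combination -d2 * a2 * a1 * hv
  have eb' : b = (u * d2) * (v * a2 * b1) := by
    rw [eb, ed]; linear_combination -d2 * a2 * b1 * hv
  have ec' : c = (u * d2) * (v * c2) := by
    rw [ec]; linear_combination -d2 * c2 * hv
  obtain ⟨α, β, hα, hβ, n1, n2, n3⟩ := gram_prim (a := v * a2 * a1) (b := v * a2 * b1) (c := v * c2)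
    (r := u * p2 * p1) (s := u * p2 * q1) (t := u * q2) (d := d * (u * d2)) (x := x) (y := y)
    (z := z) (TP.of_mul huT (ea' ▸ ha)) (by
      linear_combination (p2 * a2 * (a1 * p1 + b1 * q1) + q2 * c2) * hv + p2 * a2 * e1 + e2)
    (mul_ne_zero hd huT.ne_zero) (by
      rw [← e]; rw [ea', eb', ec']; ring)
  refine ⟨α * γ, β * γ, hα.mul hγ, hβ.mul hγ, ?_, ?_, ?_⟩
  · rw [map_mul, n1, hγN, ← map_mul, ea', mul_comm]
  · rw [map_mul, n2, hγN, ← map_mul, ec', mul_comm]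
  · rw [star_mul, mul_assoc, ← mul_assoc γ, self_mul_star, hγN, coe_commutes, ← mul_assoc,
      ← coe_commutes, coe_mul_eq_smul, re_smul, smul_eq_mul, eb', map_mul s1 (u * d2) (v * a2 * b1), ← n3]
    ring
end QO

/-! ### Gram matrices of vectors in `ℤ[√2]⁴` -/

namespace QO
open Quaternion

/-- Reduction modulo `√2`. -/
def rho : R →+* ZMod 2 := Zsqrtd.lift ⟨0, by decide⟩

theorem rho_apply (x : R) : rho x = (x.re : ZMod 2) := by simp [rho]

@[simp] theorem rho_rt : rho rt = 0 := by simp [rho_apply]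

theorem rho_eq_zero {x : R} : rho x = 0 ↔ rt ∣ x := by
  rw [rho_apply, rt_dvd_iff, ZMod.intCast_zmod_eq_zero_iff_dvd]; rfl

theorem rho_eq_one {x : R} (h : ¬ rt ∣ x) : rho x = 1 := by
  rw [← rho_eq_zero] at h
  generalize rho x = t at h
  revert t; decide

theorem hq_integral (y0 h1 h2 g : R) : hq y0 (rt * h1) (rt * h2) (2 * g) =
    mkq (s1 (y0 + h1 + h2 + g)) (s1 (h1 + g)) (s1 (h2 + g)) (s1 g) := by
  have h2 : √2 * √2 = 2 := by norm_num
  ext <;> simp [hq] <;> grind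

theorem normSq_mkq (p0 p1 p2 p3 : R) : normSq (mkq (s1 p0) (s1 p1) (s1 p2) (s1 p3)) =
    s1 (p0 ^ 2 + p1 ^ 2 + p2 ^ 2 + p3 ^ 2) := by
  rw [normSq_def']; simp

theorem re_mkq_mul_star (p0 p1 p2 p3 q0 q1 q2 q3 : R) :
    (mkq (s1 p0) (s1 p1) (s1 p2) (s1 p3) * star (mkq (s1 q0) (s1 q1) (s1 q2) (s1 q3))).re =
    s1 (p0 * q0 + p1 * q1 + p2 * q2 + p3 * q3) := by
  simp [re_mul]

set_option synthInstance.maxSize 2000 in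
theorem odd_residues : ∀ p q r s : ZMod 2, p ^ 2 + q ^ 2 + r ^ 2 + s ^ 2 + p * s + q * r = 1 →
    (p = 1 ∧ q = 0 ∧ r = 0 ∧ s = 0) ∨ (p = 0 ∧ q = 0 ∧ r = 0 ∧ s = 1) ∨
    (p = 1 ∧ q = 0 ∧ r = 0 ∧ s = -1) ∨ (p = 0 ∧ q = 1 ∧ r = 0 ∧ s = 0) ∨
    (p = 0 ∧ q = 0 ∧ r = 1 ∧ s = 0) ∨ (p = 0 ∧ q = 1 ∧ r = -1 ∧ s = 0) := by decide

/-- An element of odd norm becomes congruent to `1` modulo `√2` after multiplication by a unit of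
norm one of the order: the residue ring `H/√2` has exactly six classes of odd norm with a
representative of norm one each. -/
theorem exists_unit_congr {α : ℍ[ℝ]} (hα : InH α) {C : R} (hC : normSq α = s1 C) (hodd : ¬ rt ∣ C) :
    ∃ w, InH w ∧ normSq w = 1 ∧ ∃ h, InH h ∧ α * star w = 1 + ((s1 rt : ℝ) : ℍ[ℝ]) * h := by
  obtain ⟨x0, x1, x2, x3, rfl⟩ := hα
  rw [hq_normSq] at hC
  have hr := rho_eq_one hodd
  rw [← s1_inj hC] at hr
  simp only [map_add, map_mul, map_pow, rho_rt, zero_mul, add_zero] at hr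
  have hw : ∃ w0 w1 w2 w3 : R, rho x0 = rho w0 ∧ rho x1 = rho w1 ∧ rho x2 = rho w2 ∧
      rho x3 = rho w3 ∧ normSq (hq w0 w1 w2 w3) = 1 := by
    rcases odd_residues _ _ _ _ hr with ⟨e0, e1, e2, e3⟩ | ⟨e0, e1, e2, e3⟩ | ⟨e0, e1, e2, e3⟩ |
      ⟨e0, e1, e2, e3⟩ | ⟨e0, e1, e2, e3⟩ | ⟨e0, e1, e2, e3⟩
    · exact ⟨1, 0, 0, 0, by simp [e0], by simp [e1], by simp [e2], by simp [e3], by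
        rw [hq_normSq]; simp⟩
    · exact ⟨0, 0, 0, 1, by simp [e0], by simp [e1], by simp [e2], by simp [e3], by
        rw [hq_normSq]; simp⟩
    · exact ⟨1, 0, 0, -1, by simp [e0], by simp [e1], by simp [e2], by simp [e3], by
        rw [hq_normSq]; simp⟩
    · exact ⟨0, 1, 0, 0, by simp [e0], by simp [e1], by simp [e2], by simp [e3], by
        rw [hq_normSq]; simp⟩
    · exact ⟨0, 0, 1, 0, by simp [e0], by simp [e1], by simp [e2], by simp [e3], by
        rw [hq_normSq]; simp⟩
    · exact ⟨0, 1, -1, 0, by simp [e0], by simp [e1], by simp [e2], by simp [e3], by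
        rw [hq_normSq]; simp⟩
  obtain ⟨w0, w1, w2, w3, r0, r1, r2, r3, hN⟩ := hw
  obtain ⟨k0, k0e⟩ := rho_eq_zero.1 (show rho (x0 - w0) = 0 by rw [map_sub, r0, sub_self])
  obtain ⟨k1, k1e⟩ := rho_eq_zero.1 (show rho (x1 - w1) = 0 by rw [map_sub, r1, sub_self])
  obtain ⟨k2, k2e⟩ := rho_eq_zero.1 (show rho (x2 - w2) = 0 by rw [map_sub, r2, sub_self])
  obtain ⟨k3, k3e⟩ := rho_eq_zero.1 (show rho (x3 - w3) = 0 by rw [map_sub, r3, sub_self])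
  have hwH : InH (hq w0 w1 w2 w3) := ⟨_, _, _, _, rfl⟩
  have hkH : InH (hq k0 k1 k2 k3) := ⟨_, _, _, _, rfl⟩
  refine ⟨_, hwH, hN, _, hkH.mul hwH.star, ?_⟩
  have e : hq x0 x1 x2 x3 = hq w0 w1 w2 w3 + ((s1 rt : ℝ) : ℍ[ℝ]) * hq k0 k1 k2 k3 := by
    rw [sub_eq_iff_eq_add.1 k0e, sub_eq_iff_eq_add.1 k1e, sub_eq_iff_eq_add.1 k2e,
      sub_eq_iff_eq_add.1 k3e]
    ext <;> simp [hq] <;> ring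
  rw [e, add_mul, self_mul_star, hN, mul_assoc, coe_one]

theorem rt_dvd_of_two_dvd {x : R} (h : 2 ∣ rt * x) : rt ∣ x := by
  obtain ⟨k, hk⟩ := h
  exact ⟨k, mul_left_cancel₀ rt_ne_zero (by rw [hk, ← mul_assoc, rt_mul_rt])⟩

/-- A binary form `(A, B, C)` with `A` even, `C ≡ 1` modulo `2`, and discriminant a sum of three
squares, is the Gram matrix of two vectors of `ℤ[√2]⁴`: the form `(C, √2 B, A / 2)` is the norm form
of a pair `α, β` of the quaternion order, and after multiplication by a unit both `α` and `√2 β` have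
coordinates in `ℤ[√2]`. -/
theorem gram_four {A B C : R} (hA : 2 ∣ A) (hC : 2 ∣ C - 1) (hCT : TP C)
    (hD : ThreeSq (A * C - B ^ 2)) : ∃ a0 a1 a2 a3 b0 b1 b2 b3 : R,
    a0 ^ 2 + a1 ^ 2 + a2 ^ 2 + a3 ^ 2 = A ∧ a0 * b0 + a1 * b1 + a2 * b2 + a3 * b3 = B ∧
    b0 ^ 2 + b1 ^ 2 + b2 ^ 2 + b3 ^ 2 = C := by
  obtain ⟨E, rfl⟩ := hA
  have hodd : ¬ rt ∣ C := by
    intro h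
    have h1 : rt ∣ C - (C - 1) := dvd_sub h (rt_dvd_two.trans hC)
    rw [sub_sub_cancel, rt_dvd_iff] at h1
    norm_num at h1
  obtain ⟨d, x, y, z, hd, e⟩ := hD
  obtain ⟨α', β', hα', hβ', nα', nβ', tr'⟩ := gram_exists (a := C) (b := rt * B) (c := E) hCT
    ⟨d, rt * x, rt * y, rt * z, hd, by
      linear_combination 2 * e + (x ^ 2 + y ^ 2 + z ^ 2) * (-rt_sq) - d ^ 2 * B ^ 2 * rt_sq⟩
  obtain ⟨w, hw, hwN, h, hh, hαw⟩ := exists_unit_congr hα' nα' hodd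
  obtain ⟨β, hβdef⟩ : ∃ β, β = β' * star w := ⟨_, rfl⟩
  have hβ : InH β := hβdef ▸ hβ'.mul hw.star
  have nβ : normSq β = s1 E := by rw [hβdef, map_mul, normSq_star, hwN, mul_one, nβ']
  have nα : normSq (α' * star w) = s1 C := by rw [map_mul, normSq_star, hwN, mul_one, nα']
  have tr : 2 * (α' * star w * star β).re = s1 (rt * B) := by
    rw [← tr', hβdef, star_mul, star_star, mul_assoc, ← mul_assoc (star w), star_mul_self, hwN,
      coe_one, one_mul]
  rw [hαw] at nα tr
  obtain ⟨m, hm⟩ := (hh.mul hβ.star).trace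
  obtain ⟨h0, h1, h2, h3, rfl⟩ := hh
  obtain ⟨z0, z1, z2, z3, rfl⟩ := hβ
  have hα1 : 1 + ((s1 rt : ℝ) : ℍ[ℝ]) * hq h0 h1 h2 h3 =
      hq (1 + rt * h0) (rt * h1) (rt * h2) (rt * h3) := by
    ext <;> simp [hq] <;> ring
  have d3 : rt ∣ h3 := by
    rw [hα1, hq_normSq] at nα
    apply rt_dvd_of_two_dvd
    obtain ⟨k, hk⟩ := hC
    refine ⟨k - (rt * h0 + h0 ^ 2 + h1 ^ 2 + h2 ^ 2 + h3 ^ 2 + h1 + h2 + rt * (h0 * h1 + h0 * h2 + h1 * h3 + h2 * h3)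
      + h0 * h3 + h1 * h2), ?_⟩
    have := s1_inj nα
    grind [rt_sq]
  have dz : rt ∣ z3 := by
    have e1 : s1 (2 * z0 + rt * z1 + rt * z2 + z3) + s1 (rt * m) = s1 (rt * B) := by
      rw [← tr, ← hq_trace, map_mul, ← hm, add_mul, one_mul, mul_assoc, coe_mul_eq_smul, re_add,
        re_smul, re_star, smul_eq_mul]
      ring
    rw [← map_add] at e1
    have e2 := s1_inj e1
    exact ⟨B - m - rt * z0 - z1 - z2, by linear_combination e2 + z0 * rt_sq⟩
  obtain ⟨g, rfl⟩ := d3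
  obtain ⟨f, rfl⟩ := dz
  have hβ1 : ((s1 rt : ℝ) : ℍ[ℝ]) * hq z0 z1 z2 (rt * f) =
      mkq (s1 (rt * z0 + z1 + z2 + f)) (s1 (z1 + f)) (s1 (z2 + f)) (s1 f) := by
    rw [← hq_integral, ← rt_mul_rt, mul_assoc rt rt]
    ext <;> simp [hq] <;> ring
  rw [← mul_assoc rt rt, rt_mul_rt, hq_integral] at hα1
  rw [hα1] at nα tr
  refine ⟨rt * z0 + z1 + z2 + f, z1 + f, z2 + f, f, _, _, _, _, s1_inj ?_, s1_inj ?_, s1_inj ((normSq_mkq ..).symm.trans nα)⟩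
  · rw [← normSq_mkq, ← hβ1, map_mul, nβ, normSq_coe, ← map_pow, rt_sq, map_mul]
  · have := re_mkq_mul_star (rt * z0 + z1 + z2 + f) (z1 + f) (z2 + f) f
      (1 + rt * h0 + h1 + h2 + g) (h1 + g) (h2 + g) g
    rw [← this, ← hβ1]
    have hsw : ∀ u v : ℍ[ℝ], (u * star v).re = (v * star u).re := by
      intro u v; rw [← re_star, star_mul, star_star]
    rw [hsw, star_mul, star_coe, ← mul_assoc, ← coe_commutes, coe_mul_eq_smul, re_smul, smul_eq_mul]
    have h2 : s1 rt * s1 rt = 2 := by rw [← map_mul, rt_mul_rt, s1_two]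
    rw [map_mul] at tr
    have hrt := s1_ne_zero rt_ne_zero
    apply mul_left_cancel₀ hrt
    rw [← tr, ← mul_assoc, h2]
end QO

/-! ### Five squares -/

namespace QO

/-- Two pairs of vectors over `ℤ[√2]`, possibly of different lengths, have the same Gram matrix. -/
def SameGram {m n : ℕ} (a b : Fin m → R) (a' b' : Fin n → R) : Prop :=
  ∑ i, a' i ^ 2 = ∑ i, a i ^ 2 ∧ ∑ i, a' i * b' i = ∑ i, a i * b i ∧
    ∑ i, b' i ^ 2 = ∑ i, b i ^ 2

theorem nonneg_gram {n : ℕ} (σ : R →+* ℝ) (a b : Fin n → R) :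
    0 ≤ σ ((∑ i, a i ^ 2) * (∑ i, b i ^ 2) - (∑ i, a i * b i) ^ 2) := by
  have := Finset.sum_mul_sq_le_sq_mul_sq Finset.univ (fun i => σ (a i)) (fun i => σ (b i))
  simpa using this

/-- The determinant of a Gram matrix is zero or totally positive, hence a sum of three squares in
`ℚ(√2)`. -/
theorem threeSq_gram {n : ℕ} (a b : Fin n → R) :
    ThreeSq ((∑ i, a i ^ 2) * (∑ i, b i ^ 2) - (∑ i, a i * b i) ^ 2) := by
  have h1 := nonneg_gram s1 a b
  have h2 := nonneg_gram s2 a b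
  generalize (∑ i, a i ^ 2) * (∑ i, b i ^ 2) - (∑ i, a i * b i) ^ 2 = D at h1 h2
  by_cases hD : D = 0
  · exact ⟨1, 0, 0, 0, one_ne_zero, by simp [hD]⟩
  · exact TP.threeSq ⟨lt_of_le_of_ne h1 (s1_ne_zero hD).symm, lt_of_le_of_ne h2 (s2_ne_zero hD).symm⟩

theorem TP_sum_sq {n : ℕ} (b : Fin n → R) (h : ∑ i, b i ^ 2 ≠ 0) : TP (∑ i, b i ^ 2) := by
  constructor
  · refine lt_of_le_of_ne ?_ (s1_ne_zero h).symm
    rw [map_sum]; exact Finset.sum_nonneg fun i _ => by rw [map_pow]; positivity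
  · refine lt_of_le_of_ne ?_ (s2_ne_zero h).symm
    rw [map_sum]; exact Finset.sum_nonneg fun i _ => by rw [map_pow]; positivity

theorem sum_sq_congr (a : Fin 5 → R) : 2 ∣ (∑ i, a i ^ 2) - (∑ i, a i) ^ 2 := by
  refine ⟨-(a 0 * a 1 + a 0 * a 2 + a 0 * a 3 + a 0 * a 4 + a 1 * a 2 + a 1 * a 3 + a 1 * a 4 +
    a 2 * a 3 + a 2 * a 4 + a 3 * a 4), ?_⟩
  rw [Fin.sum_univ_five, Fin.sum_univ_five]; ring

/-- The sum of the squares is congruent to the square of the sum modulo `2`, so the congruence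
hypotheses of `gram_four` hold. -/
theorem five_to_four_aux (a b : Fin 5 → R) (ha : rt ∣ ∑ i, a i) (hb : ¬ rt ∣ ∑ i, b i) :
    ∃ a' b' : Fin 4 → R, SameGram a b a' b' := by
  have hA : 2 ∣ ∑ i, a i ^ 2 := by
    refine (dvd_sub_left ?_).1 (sum_sq_congr a)
    rw [← rt_sq]; exact pow_dvd_pow_of_dvd ha 2
  have hC : 2 ∣ (∑ i, b i ^ 2) - 1 := by
    have h1 : rt ∣ (∑ i, b i) - 1 := by
      rw [← rho_eq_zero, map_sub, rho_eq_one hb]; simp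
    obtain ⟨k, hk⟩ := h1
    have h2 : 2 ∣ (∑ i, b i) ^ 2 - 1 := ⟨rt * k + k ^ 2, by
      rw [sub_eq_iff_eq_add.1 hk]; linear_combination k ^ 2 * rt_sq⟩
    have := dvd_add (sum_sq_congr b) h2
    rwa [sub_add_sub_cancel] at this
  have hC0 : ∑ i, b i ^ 2 ≠ 0 := by
    intro h
    rw [h, two_dvd_iff] at hC
    norm_num at hC
  obtain ⟨a0, a1, a2, a3, b0, b1, b2, b3, e1, e2, e3⟩ :=
    gram_four hA hC (TP_sum_sq b hC0) (threeSq_gram a b)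
  exact ⟨![a0, a1, a2, a3], ![b0, b1, b2, b3], by simpa [Fin.sum_univ_four] using e1,
    by simpa [Fin.sum_univ_four] using e2, by simpa [Fin.sum_univ_four] using e3⟩

/-- Two vectors of `ℤ[√2]⁵`, not both of coordinate sum divisible by `√2`, have the Gram matrix of
two vectors of `ℤ[√2]⁴`. -/
theorem five_to_four (a b : Fin 5 → R) (h : ¬ (rt ∣ ∑ i, a i ∧ rt ∣ ∑ i, b i)) :
    ∃ a' b' : Fin 4 → R, SameGram a b a' b' := by
  by_cases ha : rt ∣ ∑ i, a i
  · exact five_to_four_aux a b ha fun hb => h ⟨ha, hb⟩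
  by_cases hb : rt ∣ ∑ i, b i
  · obtain ⟨b', a', e1, e2, e3⟩ := five_to_four_aux b a hb ha
    exact ⟨a', b', e3, by simpa only [mul_comm] using e2, e1⟩
  · have hab : rt ∣ ∑ i, (a i - b i) := by
      rw [← rho_eq_zero, Finset.sum_sub_distrib, map_sub, rho_eq_one ha, rho_eq_one hb, sub_self]
    obtain ⟨c', b', e1, e2, e3⟩ := five_to_four_aux (fun i => a i - b i) b hab hb
    refine ⟨fun i => c' i + b' i, b', ?_, ?_, e3⟩
    · have q1 : ∑ i, (c' i + b' i) ^ 2 = ∑ i, c' i ^ 2 + 2 * ∑ i, c' i * b' i + ∑ i, b' i ^ 2 := by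
        rw [Finset.mul_sum, ← Finset.sum_add_distrib, ← Finset.sum_add_distrib]
        exact Finset.sum_congr rfl fun i _ => by ring
      rw [q1, e1, e2, e3, Finset.mul_sum, ← Finset.sum_add_distrib, ← Finset.sum_add_distrib]
      exact Finset.sum_congr rfl fun i _ => by ring
    · have q1 : ∑ i, (c' i + b' i) * b' i = ∑ i, c' i * b' i + ∑ i, b' i ^ 2 := by
        rw [← Finset.sum_add_distrib]
        exact Finset.sum_congr rfl fun i _ => by ring
      rw [q1, e2, e3, ← Finset.sum_add_distrib]
      exact Finset.sum_congr rfl fun i _ => by ring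

/-- The size `x² + 2y²` of `x + y√2`, doubled by multiplication by `√2`. -/
def sz (x : R) : ℕ := x.re.natAbs ^ 2 + 2 * x.im.natAbs ^ 2

theorem sz_rt_mul (x : R) : sz (rt * x) = 2 * sz x := by
  simp [sz, Int.natAbs_mul]; ring

theorem sz_eq_zero {x : R} (h : sz x = 0) : x = 0 := by
  simp [sz] at h
  exact Zsqrtd.ext h.1 h.2

theorem rt_dvd_of_forall (a : Fin 6 → R) (h : ∀ i : Fin 6, rt ∣ ∑ j : Fin 5, a (i.succAbove j))
    (i : Fin 6) : rt ∣ a i := by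
  have h1 : ∀ i, rho (a i) = rho (∑ j, a j) := by
    intro i
    rw [Fin.sum_univ_succAbove a i, map_add, rho_eq_zero.2 (h i), add_zero]
  have h2 : rho (∑ j, a j) = 0 := by
    have h3 : ∀ t : ZMod 2, 6 * t = 0 := by decide
    conv_lhs => rw [map_sum]
    simp only [h1]
    simpa using h3 (rho (∑ j, a j))
  rw [← rho_eq_zero, h1, h2]

/-- Either omitting some coordinate leaves vectors to which the passage from five to four
coordinates applies, or all coordinates are divisible by `√2` and one can descend. -/
theorem six_to_five (a b : Fin 6 → R) : ∃ a' b' : Fin 5 → R, SameGram a b a' b' := by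
  induction hk : ∑ i, (sz (a i) + sz (b i)) using Nat.strong_induction_on generalizing a b with
  | _ k ih =>
  by_cases hex : ∃ i : Fin 6, ¬ (rt ∣ ∑ j : Fin 5, a (i.succAbove j) ∧
      rt ∣ ∑ j : Fin 5, b (i.succAbove j))
  · obtain ⟨i, hi⟩ := hex
    obtain ⟨a', b', e1, e2, e3⟩ := five_to_four _ _ hi
    refine ⟨Fin.cons (a i) a', Fin.cons (b i) b', ?_, ?_, ?_⟩
    · rw [Fin.sum_univ_succ, Fin.sum_univ_succAbove (fun i => a i ^ 2) i]; simp [e1]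
    · rw [Fin.sum_univ_succ, Fin.sum_univ_succAbove (fun i => a i * b i) i]; simp [e2]
    · rw [Fin.sum_univ_succ, Fin.sum_univ_succAbove (fun i => b i ^ 2) i]; simp [e3]
  · push Not at hex
    choose a1 ha1 using rt_dvd_of_forall a fun i => (hex i).1
    choose b1 hb1 using rt_dvd_of_forall b fun i => (hex i).2
    have hk2 : k = 2 * ∑ i, (sz (a1 i) + sz (b1 i)) := by
      rw [← hk, Finset.mul_sum]
      exact Finset.sum_congr rfl fun i _ => by rw [ha1, hb1, sz_rt_mul, sz_rt_mul]; ring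
    by_cases hk0 : k = 0
    · have hz : ∀ i, a i = 0 ∧ b i = 0 := by
        intro i
        rw [hk0, Finset.sum_eq_zero_iff] at hk
        have := hk i (Finset.mem_univ i)
        exact ⟨sz_eq_zero (by omega), sz_eq_zero (by omega)⟩
      exact ⟨0, 0, by simp [hz], by simp [hz], by simp [hz]⟩
    · obtain ⟨a', b', e1, e2, e3⟩ := ih _ (by omega) a1 b1 rfl
      refine ⟨fun i => rt * a' i, fun i => rt * b' i, ?_, ?_, ?_⟩
      · simp only [ha1, mul_pow, ← Finset.mul_sum, e1]
      · simp only [ha1, hb1, mul_mul_mul_comm rt, ← Finset.mul_sum, e2]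
      · simp only [hb1, mul_pow, ← Finset.mul_sum, e3]

theorem any_to_five (n : ℕ) (a b : Fin n → R) : ∃ a' b' : Fin 5 → R, SameGram a b a' b' := by
  induction n with
  | zero => exact ⟨0, 0, by simp [SameGram]⟩
  | succ n ih =>
    obtain ⟨a1, b1, e1, e2, e3⟩ := ih (fun i => a i.succ) (fun i => b i.succ)
    obtain ⟨a', b', f1, f2, f3⟩ := six_to_five (Fin.cons (a 0) a1) (Fin.cons (b 0) b1)
    refine ⟨a', b', ?_, ?_, ?_⟩
    · rw [f1, Fin.sum_univ_succ, Fin.sum_univ_succ (fun i => a i ^ 2), ← e1]; simp only [Fin.cons_zero, Fin.cons_succ]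
    · rw [f2, Fin.sum_univ_succ, Fin.sum_univ_succ (fun i => a i * b i), ← e2]; simp only [Fin.cons_zero, Fin.cons_succ]
    · rw [f3, Fin.sum_univ_succ, Fin.sum_univ_succ (fun i => b i ^ 2), ← e3]; simp only [Fin.cons_zero, Fin.cons_succ]

/-- The basis `1, √2` of `ℤ[√2]` over `ℤ`. -/
noncomputable def basisR : Module.Basis (Fin 2) ℤ R := Module.Basis.ofEquivFun
  { toFun := fun x => ![x.re, x.im]
    invFun := fun v => ⟨v 0, v 1⟩
    map_add' := fun x y => by simp
    map_smul' := fun m x => by simp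
    left_inv := fun x => by simp
    right_inv := fun v => by ext i; fin_cases i <;> rfl }

theorem finrank_R : Module.finrank ℤ R = 2 := by
  rw [Module.finrank_eq_card_basis basisR, Fintype.card_fin]

/-- In a ring with a ring map `φ` from `ℤ[√2]`, sums of squares of elements
`φ(a)α + φ(b)β` are sums of five such squares, since they only depend on the Gram matrix of the
coefficient vectors. -/
theorem five_of_generators {S : Type*} [CommRing S] (φ : R →+* S) (α β : S)
    (hgen : ∀ x, ∃ a b, x = φ a * α + φ b * β) {n : ℕ} (f : Fin n → S) :
    ∃ g : Fin 5 → S, ∑ i, f i ^ 2 = ∑ i, g i ^ 2 := by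
  choose a b hab using fun i => hgen (f i)
  obtain ⟨a', b', e1, e2, e3⟩ := any_to_five n a b
  refine ⟨fun i => φ (a' i) * α + φ (b' i) * β, ?_⟩
  have key : ∀ {m : ℕ} (a b : Fin m → R), ∑ i, (φ (a i) * α + φ (b i) * β) ^ 2 =
      φ (∑ i, a i ^ 2) * α ^ 2 + φ (∑ i, a i * b i) * (2 * (α * β)) + φ (∑ i, b i ^ 2) * β ^ 2 := by
    intro m a b
    simp only [map_sum, Finset.sum_mul, ← Finset.sum_add_distrib]
    exact Finset.sum_congr rfl fun i _ => by rw [map_pow, map_mul, map_pow]; ring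
  simp only [hab]
  rw [key, key, e1, e2, e3]

end QO

/-- Let `K` be a number field with `[K : ℚ] = 4` containing an element `s`
with `s² = 2`, and let `O ⊆ K` be an order (a subring that is finitely generated as a
`ℤ`-module and contains a `ℚ`-basis of `K`, the latter being equivalent to `O` spanning `K`
over `ℚ`) with `s ∈ O`.  Then the Pythagoras number of `O` is at most `5`: every element of
`O` that is a sum of finitely many squares in `O` is a sum of at most `5` squares in `O`. -/
theorem pythagoras_number_of_quartic_order_le_five
    (K : Type*) [Field K] [NumberField K]
    (hdeg : Module.finrank ℚ K = 4)
    (s : K) (hs : s ^ 2 = 2)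
    (O : Subring K)
    (hsO : s ∈ O)
    (hfg : Module.Finite ℤ O)
    (hbasis : Submodule.span ℚ (O : Set K) = ⊤)
    (t : O) (ht : ∃ (n : ℕ) (f : Fin n → O), t = ∑ i, f i ^ 2) :
    ∃ f : Fin 5 → O, t = ∑ i, f i ^ 2 := by
  obtain ⟨n, f, rfl⟩ := ht
  let φ : QO.R →+* O := Zsqrtd.lift ⟨⟨s, hsO⟩, by ext; rw [← pow_two]; push_cast; exact hs⟩
  have hφ : Function.Injective φ := Zsqrtd.lift_injective _ fun m hm => by
    have hlt : m.natAbs < 2 := by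
      by_contra hc
      have : (2 : ℤ) ≤ m.natAbs := by omega
      have h2 : (m.natAbs : ℤ) * m.natAbs = m * m := Int.natAbs_mul_self' m
      nlinarith
    have : m = -1 ∨ m = 0 ∨ m = 1 := by omega
    rcases this with rfl | rfl | rfl <;> norm_num at hm
  let _ : Algebra QO.R O := φ.toAlgebra
  have hsmul : ∀ (r : QO.R) (x : O), r • x = φ r * x := fun r x => rfl
  have : Module.Finite QO.R O := Module.Finite.of_restrictScalars_finite ℤ QO.R O
  have : Module.IsTorsionFree QO.R O := Module.isTorsionFree_iff_algebraMap_injective.2 hφ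
  have : Module.Free QO.R O := inferInstance
  have : Module.Free ℤ QO.R := Module.Free.of_basis QO.basisR
  have : Module.Free ℤ O := Module.Free.trans (S := QO.R)
  have hrank : Module.finrank QO.R O ≤ 2 := by
    have h1 := Module.finrank_mul_finrank ℤ QO.R O
    have h2 : Module.finrank ℤ O ≤ 4 := by
      have hli := (Module.finBasis ℤ O).linearIndependent
      have hli2 := hli.map' (O.subtype.toIntAlgHom.toLinearMap)
        (LinearMap.ker_eq_bot.2 Subtype.val_injective)
      have hli3 := (LinearIndependent.iff_fractionRing ℤ ℚ).1 hli2
      simpa [hdeg] using hli3.fintype_card_le_finrank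
    rw [QO.finrank_R] at h1
    omega
  have hgen : ∃ α β : O, ∀ x, ∃ a b, x = φ a * α + φ b * β := by
    have B := Module.finBasis QO.R O
    generalize Module.finrank QO.R O = m at B hrank
    interval_cases m
    · exact ⟨0, 0, fun x => ⟨0, 0, by rw [← B.sum_repr x]; simp⟩⟩
    · exact ⟨B 0, 0, fun x => ⟨B.repr x 0, 0, by
        conv_lhs => rw [← B.sum_repr x]
        simp [hsmul]⟩⟩
    · exact ⟨B 0, B 1, fun x => ⟨B.repr x 0, B.repr x 1, by
        conv_lhs => rw [← B.sum_repr x]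
        simp [hsmul, Fin.sum_univ_two]⟩⟩
  obtain ⟨α, β, hgen⟩ := hgen
  exact QO.five_of_generators φ α β hgen f
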